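/- Let u : B_1^+ ∪ B_1^0 → ℝ be continuous, a-harmonic in B_1^+, and satisfy ∫_{B_1^+} y^a u(x,y)² dx dy < ∞, and suppose that f(x) := u(x,0) is C^{1,1} on B_1^0. Then there exist a function g : B_{1/2}^0 → ℝ which is differentiable with a-Hölder continuous derivative, and a constant C depending only on n and a, such that for all (x,y) ∈ B_{1/2}^+: |u(x,y) − f(x) − y^{1−a} g(x)| ≤ C y² ( ‖f‖_{C^{1,1}(B_1^0)} + (∫_{B_1^+} y^a u²)^{1/2} ). -/

import Mathlib

open Set Filter Topology MeasureTheory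
open scoped RealInnerProductSpace

noncomputable section

abbrev En (n : ℕ) := EuclideanSpace ℝ (Fin n)

/-- The open upper half ball `B_r^+`. -/
def halfBall (n : ℕ) (r : ℝ) : Set (En n × ℝ) :=
  {p | ‖p.1‖ ^ 2 + p.2 ^ 2 < r ^ 2 ∧ 0 < p.2}

/-- The closure of the upper half ball. -/
def closedHalfBall (n : ℕ) (r : ℝ) : Set (En n × ℝ) :=
  {p | ‖p.1‖ ^ 2 + p.2 ^ 2 ≤ r ^ 2 ∧ 0 ≤ p.2}

/-- `B_r^+ ∪ B_r^0`. -/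
def halfBallWithBase (n : ℕ) (r : ℝ) : Set (En n × ℝ) :=
  {p | ‖p.1‖ ^ 2 + p.2 ^ 2 < r ^ 2 ∧ 0 ≤ p.2}

/-- The flat ball `B_r^0` in `ℝⁿ`. -/
def flatBall (n : ℕ) (r : ℝ) : Set (En n) := {x | ‖x‖ < r}

/-- `(∂B_1)^+`. -/
def spherePlus (n : ℕ) : Set (En n × ℝ) := {p | ‖p.1‖ ^ 2 + p.2 ^ 2 = 1 ∧ 0 < p.2}

/-- closure of `(∂B_1)^+`. -/
def closedSpherePlus (n : ℕ) : Set (En n × ℝ) := {p | ‖p.1‖ ^ 2 + p.2 ^ 2 = 1 ∧ 0 ≤ p.2}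

/-- Second directional derivative of `u` at `p` in direction `v`. -/
def D2 {n : ℕ} (u : En n × ℝ → ℝ) (p v : En n × ℝ) : ℝ :=
  fderiv ℝ (fun q => fderiv ℝ u q v) p v

/-- The Laplacian in the `n+1` variables `(x, y)`. -/
def lap {n : ℕ} (u : En n × ℝ → ℝ) (p : En n × ℝ) : ℝ :=
  (∑ i : Fin n, D2 u p (EuclideanSpace.single i 1, 0)) + D2 u p (0, 1)

/-- `u` is `a`-harmonic on `Ω`: it is `C²` there and `Δu + (a/y) ∂_y u = 0`. -/
def IsAHarmonicOn {n : ℕ} (a : ℝ) (u : En n × ℝ → ℝ) (Ω : Set (En n × ℝ)) : Prop :=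
  ContDiffOn ℝ 2 u Ω ∧ ∀ p ∈ Ω, lap u p + (a / p.2) * fderiv ℝ u p (0, 1) = 0

/-- `lim_{y → 0⁺} y^a ∂_y w(x, y) = L`. -/
def NormalDerivLimit {n : ℕ} (a : ℝ) (w : En n × ℝ → ℝ) (x : En n) (L : ℝ) : Prop :=
  Tendsto (fun y : ℝ => y ^ a * fderiv ℝ w (x, y) (0, 1)) (𝓝[>] (0 : ℝ)) (𝓝 L)

/-- The boundary-restriction `(t, x) ↦ u(t, x, 0)`. -/
def bdryFun {n : ℕ} (u : ℝ → En n × ℝ → ℝ) : ℝ × En n → ℝ := fun q => u q.1 (q.2, 0)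

/-- A classical solution of the extended drift–diffusion equation on
`[-1,0] × closure (B_1^+)` with drift `b` and right-hand side `f`. -/
def IsExtDDSolution {n : ℕ} (a : ℝ) (b : ℝ → En n → En n) (f : ℝ → En n → ℝ)
    (u : ℝ → En n × ℝ → ℝ) : Prop :=
  ContinuousOn (fun q : ℝ × (En n × ℝ) => u q.1 q.2) (Icc (-1 : ℝ) 0 ×ˢ closedHalfBall n 1) ∧
  (∀ t ∈ Icc (-1 : ℝ) 0, IsAHarmonicOn a (u t) (halfBall n 1)) ∧
  (∀ q ∈ Ioc (-1 : ℝ) 0 ×ˢ flatBall n 1,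
      DifferentiableWithinAt ℝ (bdryFun u) (Ioc (-1 : ℝ) 0 ×ˢ flatBall n 1) q) ∧
  (∀ t x, (t, x) ∈ Ioc (-1 : ℝ) 0 ×ˢ flatBall n 1 →
      ∃ L : ℝ, NormalDerivLimit a (u t) x L ∧
        fderivWithin ℝ (bdryFun u) (Ioc (-1 : ℝ) 0 ×ˢ flatBall n 1) (t, x) (1, 0) +
          fderivWithin ℝ (bdryFun u) (Ioc (-1 : ℝ) 0 ×ˢ flatBall n 1) (t, x) (0, b t x) -
          L = f t x)

/-- A classical solution of the localized fractional heat equation on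
`[-1,0] × closure (B_1^+)`. -/
def IsFracHeatSolution {n : ℕ} (a : ℝ) (u : ℝ → En n × ℝ → ℝ) : Prop :=
  ContinuousOn (fun q : ℝ × (En n × ℝ) => u q.1 q.2) (Icc (-1 : ℝ) 0 ×ˢ closedHalfBall n 1) ∧
  (∀ t ∈ Icc (-1 : ℝ) 0, IsAHarmonicOn a (u t) (halfBall n 1)) ∧
  (∀ t ∈ Ioc (-1 : ℝ) 0, ∀ x ∈ flatBall n 1,
      DifferentiableWithinAt ℝ (fun τ => u τ (x, 0)) (Ioc (-1 : ℝ) 0) t ∧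
      NormalDerivLimit a (u t) x (derivWithin (fun τ => u τ (x, 0)) (Ioc (-1 : ℝ) 0) t))


/-- coordinate direction in the `x` variables -/
def eX {n : ℕ} (i : Fin n) : En n × ℝ := (EuclideanSpace.single i 1, 0)

/-- the operator -/
def Lop {n : ℕ} (a : ℝ) (w : En n × ℝ → ℝ) (p : En n × ℝ) : ℝ :=
  lap w p + (a / p.2) * fderiv ℝ w p (0, 1)

theorem fderiv_differentiableAt {n : ℕ} {w : En n × ℝ → ℝ} {p : En n × ℝ}
    (h : ContDiffAt ℝ 2 w p) : DifferentiableAt ℝ (fderiv ℝ w) p :=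
  (h.fderiv_right (m := 1) (by norm_num)).differentiableAt (by norm_num)

theorem fderiv_apply_differentiableAt {n : ℕ} {w : En n × ℝ → ℝ} {p : En n × ℝ}
    (h : ContDiffAt ℝ 2 w p) (v : En n × ℝ) :
    DifferentiableAt ℝ (fun q => fderiv ℝ w q v) p :=
  (fderiv_differentiableAt h).clm_apply (differentiableAt_const v)

theorem ev_differentiableAt {n : ℕ} {w : En n × ℝ → ℝ} {p : En n × ℝ}
    (h : ContDiffAt ℝ 2 w p) : ∀ᶠ q in 𝓝 p, DifferentiableAt ℝ w q := by
  filter_upwards [h.eventually (by simp)] with q hq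
  exact hq.differentiableAt (by norm_num)

theorem D2_sub {n : ℕ} {w z : En n × ℝ → ℝ} {p : En n × ℝ}
    (hw : ContDiffAt ℝ 2 w p) (hz : ContDiffAt ℝ 2 z p) (v : En n × ℝ) :
    D2 (fun q => w q - z q) p v = D2 w p v - D2 z p v := by
  unfold D2
  have : (fun q => fderiv ℝ (fun q => w q - z q) q v) =ᶠ[𝓝 p]
      fun q => fderiv ℝ w q v - fderiv ℝ z q v := by
    filter_upwards [ev_differentiableAt hw, ev_differentiableAt hz] with q h1 h2
    rw [fderiv_fun_sub h1 h2]; rfl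
  rw [this.fderiv_eq, fderiv_fun_sub (fderiv_apply_differentiableAt hw v)
    (fderiv_apply_differentiableAt hz v)]
  rfl

theorem D2_sum {n : ℕ} {ι : Type*} (t : Finset ι) {w : ι → En n × ℝ → ℝ} {p : En n × ℝ}
    (hw : ∀ i ∈ t, ContDiffAt ℝ 2 (w i) p) (v : En n × ℝ) :
    D2 (fun q => ∑ i ∈ t, w i q) p v = ∑ i ∈ t, D2 (w i) p v := by
  unfold D2
  have : (fun q => fderiv ℝ (fun q => ∑ i ∈ t, w i q) q v) =ᶠ[𝓝 p]
      fun q => ∑ i ∈ t, fderiv ℝ (w i) q v := by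
    have := (Filter.eventually_all_finset t).2 (fun i hi => ev_differentiableAt (hw i hi))
    filter_upwards [this] with q h1
    rw [fderiv_fun_sum h1]; simp
  rw [this.fderiv_eq, fderiv_fun_sum (fun i hi => fderiv_apply_differentiableAt (hw i hi) v)]
  simp

theorem D2_add {n : ℕ} {w z : En n × ℝ → ℝ} {p : En n × ℝ}
    (hw : ContDiffAt ℝ 2 w p) (hz : ContDiffAt ℝ 2 z p) (v : En n × ℝ) :
    D2 (fun q => w q + z q) p v = D2 w p v + D2 z p v := by
  unfold D2
  have : (fun q => fderiv ℝ (fun q => w q + z q) q v) =ᶠ[𝓝 p]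
      fun q => fderiv ℝ w q v + fderiv ℝ z q v := by
    filter_upwards [ev_differentiableAt hw, ev_differentiableAt hz] with q h1 h2
    rw [fderiv_fun_add h1 h2]; rfl
  rw [this.fderiv_eq, fderiv_fun_add (fderiv_apply_differentiableAt hw v)
    (fderiv_apply_differentiableAt hz v)]
  rfl

theorem Lop_sub {n : ℕ} (a : ℝ) {w z : En n × ℝ → ℝ} {p : En n × ℝ}
    (hw : ContDiffAt ℝ 2 w p) (hz : ContDiffAt ℝ 2 z p) :
    Lop a (fun q => w q - z q) p = Lop a w p - Lop a z p := by
  unfold Lop lap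
  simp only [D2_sub hw hz]
  rw [fderiv_fun_sub (hw.differentiableAt (by norm_num)) (hz.differentiableAt (by norm_num)),
    Finset.sum_sub_distrib]
  simp only [ContinuousLinearMap.sub_apply]
  ring

/-- composition of one-variable function with functional -/
theorem fderiv_comp_lin {n : ℕ} (ℓ : En n × ℝ →L[ℝ] ℝ) {β : ℝ → ℝ} {p : En n × ℝ}
    (hβ : DifferentiableAt ℝ β (ℓ p)) (v : En n × ℝ) :
    fderiv ℝ (fun q => β (ℓ q)) p v = deriv β (ℓ p) * ℓ v := by
  have h := (hβ.hasDerivAt.comp_hasFDerivAt p ℓ.hasFDerivAt)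
  have h2 : fderiv ℝ (fun q => β (ℓ q)) p = deriv β (ℓ p) • ℓ := h.fderiv
  rw [h2]; simp

theorem D2_comp_lin {n : ℕ} (ℓ : En n × ℝ →L[ℝ] ℝ) {β : ℝ → ℝ} {p : En n × ℝ}
    (hβ : ContDiffAt ℝ 2 β (ℓ p)) (v : En n × ℝ) :
    D2 (fun q => β (ℓ q)) p v = deriv (deriv β) (ℓ p) * (ℓ v) ^ 2 := by
  unfold D2
  have hev : ∀ᶠ t in 𝓝 (ℓ p), DifferentiableAt ℝ β t := by
    filter_upwards [hβ.eventually (by simp)] with q hq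
    exact hq.differentiableAt (by norm_num)
  have : (fun q => fderiv ℝ (fun q => β (ℓ q)) q v) =ᶠ[𝓝 p]
      fun q => deriv β (ℓ q) * ℓ v := by
    filter_upwards [ℓ.continuous.continuousAt.eventually hev] with q hq
    exact fderiv_comp_lin ℓ hq v
  have hd : DifferentiableAt ℝ (deriv β) (ℓ p) := by
    have h1 : ContDiffAt ℝ 1 (fderiv ℝ β) (ℓ p) := hβ.fderiv_right (by norm_num)
    have h2 : deriv β = fun t => fderiv ℝ β t 1 := by ext t; simp
    rw [h2]
    exact (h1.differentiableAt (by norm_num)).clm_apply (differentiableAt_const _)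
  rw [this.fderiv_eq]
  have h3 : DifferentiableAt ℝ (fun t => deriv β t * ℓ v) (ℓ p) := hd.mul_const _
  have h4 := fderiv_comp_lin ℓ h3 v
  rw [h4, deriv_mul_const hd]
  ring

/-- coordinate functional -/
def cX {n : ℕ} (i : Fin n) : En n × ℝ →L[ℝ] ℝ :=
  (EuclideanSpace.proj i).comp (ContinuousLinearMap.fst ℝ (En n) ℝ)

theorem cX_apply {n : ℕ} (i : Fin n) (p : En n × ℝ) : cX i p = p.1 i := rfl

theorem cX_eX {n : ℕ} (i j : Fin n) : cX i (eX j) = if i = j then 1 else 0 := by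
  simp [cX_apply, eX]

/-- barrier of separated form -/
def sepf {n : ℕ} (α : Fin n → ℝ → ℝ) (β : ℝ → ℝ) (p : En n × ℝ) : ℝ :=
  ∑ i, α i (p.1 i) + β p.2

theorem contDiffAt_sepf {n : ℕ} {α : Fin n → ℝ → ℝ} {β : ℝ → ℝ} {p : En n × ℝ}
    (hα : ∀ i, ContDiffAt ℝ 2 (α i) (p.1 i)) (hβ : ContDiffAt ℝ 2 β p.2) :
    ContDiffAt ℝ 2 (sepf α β) p := by
  unfold sepf
  refine ContDiffAt.add (ContDiffAt.sum fun i _ => ?_) ?_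
  · exact (show ContDiffAt ℝ 2 (α i) (cX i p) from hα i).comp p (cX i).contDiff.contDiffAt
  · exact ContDiffAt.comp (g := β) p hβ contDiffAt_snd

theorem Lop_sepf {n : ℕ} (a : ℝ) {α : Fin n → ℝ → ℝ} {β : ℝ → ℝ} {p : En n × ℝ}
    (hα : ∀ i, ContDiffAt ℝ 2 (α i) (p.1 i)) (hβ : ContDiffAt ℝ 2 β p.2) :
    Lop a (sepf α β) p = ∑ i, deriv (deriv (α i)) (p.1 i) + deriv (deriv β) p.2
      + a / p.2 * deriv β p.2 := by
  have hs : sepf α β = fun q => (∑ i, α i (cX i q)) +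
      β ((ContinuousLinearMap.snd ℝ (En n) ℝ) q) := by
    ext q; rfl
  have h1 : ∀ i, ContDiffAt ℝ 2 (fun q => α i (cX i q)) p := fun i =>
    (show ContDiffAt ℝ 2 (α i) (cX i p) from hα i).comp p (cX i).contDiff.contDiffAt
  have h2 : ContDiffAt ℝ 2 (fun q => β ((ContinuousLinearMap.snd ℝ (En n) ℝ) q)) p :=
    ContDiffAt.comp (g := β) p hβ contDiffAt_snd
  have h3 : ContDiffAt ℝ 2 (fun q => ∑ i, α i (cX i q)) p := ContDiffAt.sum fun i _ => h1 i
  have hD : ∀ v, D2 (sepf α β) p v = ∑ i, deriv (deriv (α i)) (p.1 i) * (cX i v) ^ 2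
      + deriv (deriv β) p.2 * v.2 ^ 2 := by
    intro v
    rw [hs, D2_add h3 h2, D2_sum _ (fun i _ => h1 i),
      D2_comp_lin (ContinuousLinearMap.snd ℝ (En n) ℝ) (by exact hβ)]
    congr 1
    exact Finset.sum_congr rfl fun i _ => D2_comp_lin (cX i) (hα i) v
  have hf : fderiv ℝ (sepf α β) p (0, 1) = deriv β p.2 := by
    rw [hs, fderiv_fun_add (h3.differentiableAt (by norm_num)) (h2.differentiableAt (by norm_num)),
      fderiv_fun_sum (fun i _ => (h1 i).differentiableAt (by norm_num))]
    simp only [ContinuousLinearMap.add_apply, ContinuousLinearMap.sum_apply]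
    rw [fderiv_comp_lin _ (hβ.differentiableAt (by norm_num))]
    rw [Finset.sum_eq_zero]
    · simp
    · intro i _
      rw [fderiv_comp_lin _ ((hα i).differentiableAt (by norm_num))]
      simp [cX_apply]
  unfold Lop lap
  rw [hf]
  congr 1
  rw [hD]
  simp only [hD]
  have : ∀ i j : Fin n, cX j (EuclideanSpace.single i (1:ℝ), (0:ℝ)) = if j = i then 1 else 0 :=
    fun i j => cX_eX j i
  simp only [this]
  simp [cX_apply]

/-- second derivative test -/
theorem deriv2_nonpos {φ : ℝ → ℝ} (h : IsLocalMax φ 0) (hc : ContinuousAt φ 0) :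
    deriv (deriv φ) 0 ≤ 0 := by
  by_contra! hp
  have h1 := isLocalMin_of_deriv_deriv_pos hp h.deriv_eq_zero hc
  have h2 : φ =ᶠ[𝓝 0] fun _ => φ 0 := by
    filter_upwards [h, h1] with x hx hy
    exact le_antisymm hx hy
  have h3 := h2.deriv.deriv_eq
  rw [h3] at hp
  simp at hp

theorem D2_nonpos {n : ℕ} {w : En n × ℝ → ℝ} {p : En n × ℝ}
    (hw : ContDiffAt ℝ 2 w p) (h : IsLocalMax w p) (v : En n × ℝ) : D2 w p v ≤ 0 := by
  have hl : ∀ t : ℝ, HasDerivAt (fun t : ℝ => p + t • v) v t := fun t => by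
    simpa using ((hasDerivAt_id t).smul_const v).const_add p
  have hl0 : Tendsto (fun t : ℝ => p + t • v) (𝓝 0) (𝓝 p) := by
    have := (hl 0).continuousAt.tendsto
    simpa using this
  have e1 : deriv (fun t : ℝ => w (p + t • v)) =ᶠ[𝓝 0] fun t => fderiv ℝ w (p + t • v) v := by
    filter_upwards [hl0.eventually (ev_differentiableAt hw)] with t ht
    exact (ht.hasFDerivAt.comp_hasDerivAt t (hl t)).deriv
  have e2 : deriv (deriv (fun t : ℝ => w (p + t • v))) 0 = D2 w p v := by
    rw [e1.deriv_eq]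
    have hd := fderiv_apply_differentiableAt hw v
    have hd' : HasFDerivAt (fun q => fderiv ℝ w q v) (fderiv ℝ (fun q => fderiv ℝ w q v) p)
      (p + (0:ℝ) • v) := by simpa using hd.hasFDerivAt
    exact (hd'.comp_hasDerivAt (0:ℝ) (hl 0)).deriv
  rw [← e2]
  apply deriv2_nonpos
  · have : ∀ᶠ t in 𝓝 (0:ℝ), w (p + t • v) ≤ w p := hl0.eventually h
    filter_upwards [this] with t ht
    simpa using ht
  · have : ContinuousAt w (p + (0:ℝ) • v) := by simpa using hw.continuousAt
    exact this.comp (f := fun t : ℝ => p + t • v) (hl 0).continuousAt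

theorem max_principle {n : ℕ} (a : ℝ) {w : En n × ℝ → ℝ} {K O : Set (En n × ℝ)}
    (hK : IsCompact K) (hO : IsOpen O) (hOK : O ⊆ K)
    (hc : ContinuousOn w K) (hC : ∀ p ∈ O, ContDiffAt ℝ 2 w p)
    (hL : ∀ p ∈ O, 0 < Lop a w p) (hb : ∀ p ∈ K, p ∉ O → w p ≤ 0) :
    ∀ p ∈ K, w p ≤ 0 := by
  intro p hp
  obtain ⟨q, hq, hmax⟩ := hK.exists_isMaxOn ⟨p, hp⟩ hc
  by_cases hqO : q ∈ O
  · exfalso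
    have hloc : IsLocalMax w q := by
      filter_upwards [hO.mem_nhds hqO] with z hz
      exact hmax (hOK hz)
    have h := hL q hqO
    unfold Lop lap at h
    rw [hloc.fderiv_eq_zero] at h
    have h1 : ∑ i : Fin n, D2 w q (EuclideanSpace.single i 1, 0) ≤ 0 :=
      Finset.sum_nonpos fun i _ => D2_nonpos (hC q hqO) hloc _
    have h2 := D2_nonpos (hC q hqO) hloc (0, 1)
    simp at h
    linarith
  · exact (hmax hp).trans (hb q hq hqO)

/-- pointwise version of `a`-harmonicity -/
def AH {n : ℕ} (a : ℝ) (u : En n × ℝ → ℝ) (Ω : Set (En n × ℝ)) : Prop :=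
  ∀ p ∈ Ω, ContDiffAt ℝ 2 u p ∧ Lop a u p = 0

theorem AH.sub {n : ℕ} {a : ℝ} {u w : En n × ℝ → ℝ} {Ω : Set (En n × ℝ)}
    (hu : AH a u Ω) (hw : AH a w Ω) : AH a (fun p => u p - w p) Ω := by
  intro p hp
  refine ⟨(hu p hp).1.sub (hw p hp).1, ?_⟩
  rw [Lop_sub a (hu p hp).1 (hw p hp).1, (hu p hp).2, (hw p hp).2, sub_zero]

theorem fderiv_comp_aff {n : ℕ} (T : En n × ℝ →L[ℝ] En n × ℝ) (c : En n × ℝ)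
    {u : En n × ℝ → ℝ} {p : En n × ℝ} (hu : DifferentiableAt ℝ u (T p + c)) (v : En n × ℝ) :
    fderiv ℝ (fun q => u (T q + c)) p v = fderiv ℝ u (T p + c) (T v) := by
  have h1 : HasFDerivAt (fun q => T q + c) T p := T.hasFDerivAt.add_const c
  have h2 := (hu.hasFDerivAt.comp p h1).fderiv
  have h3 : fderiv ℝ (fun q => u (T q + c)) p = (fderiv ℝ u (T p + c)).comp T := h2
  rw [h3]; rfl

theorem D2_comp_aff {n : ℕ} (T : En n × ℝ →L[ℝ] En n × ℝ) (c : En n × ℝ)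
    {u : En n × ℝ → ℝ} {p : En n × ℝ} (hu : ContDiffAt ℝ 2 u (T p + c)) (v : En n × ℝ) :
    D2 (fun q => u (T q + c)) p v = D2 u (T p + c) (T v) := by
  unfold D2
  have hT : ContinuousAt (fun q => T q + c) p := by fun_prop
  have : (fun q => fderiv ℝ (fun q => u (T q + c)) q v) =ᶠ[𝓝 p]
      fun q => fderiv ℝ u (T q + c) (T v) := by
    filter_upwards [hT.eventually (ev_differentiableAt hu)] with q hq
    exact fderiv_comp_aff T c hq v
  rw [this.fderiv_eq]
  exact fderiv_comp_aff (u := fun z => fderiv ℝ u z (T v)) T c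
    (fderiv_apply_differentiableAt hu (T v)) v

theorem D2_neg_dir {n : ℕ} (u : En n × ℝ → ℝ) (p v : En n × ℝ) : D2 u p (-v) = D2 u p v := by
  unfold D2
  simp

theorem AH.comp_aff {n : ℕ} {a : ℝ} {u : En n × ℝ → ℝ} {Ω Ω' : Set (En n × ℝ)}
    (hu : AH a u Ω) (T : En n × ℝ →L[ℝ] En n × ℝ) (c : En n × ℝ)
    (hm : ∀ p ∈ Ω', T p + c ∈ Ω) (h2 : ∀ p, (T p + c).2 = p.2)
    (hT : ∀ i, T (eX i) = eX i ∨ T (eX i) = - eX i) (hT2 : T (0, 1) = (0, 1)) :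
    AH a (fun p => u (T p + c)) Ω' := by
  intro p hp
  obtain ⟨hc, hl⟩ := hu _ (hm p hp)
  refine ⟨hc.comp (f := fun p => T p + c) p (by fun_prop), ?_⟩
  rw [← hl]
  unfold Lop lap
  rw [fderiv_comp_aff T c (hc.differentiableAt (by norm_num)), hT2, h2, D2_comp_aff T c hc, hT2]
  congr 2
  refine Finset.sum_congr rfl fun i _ => ?_
  rw [D2_comp_aff T c hc]
  rcases hT i with h | h
  · have : T (EuclideanSpace.single i 1, 0) = (EuclideanSpace.single i 1, 0) := h
    rw [this]
  · have : T (EuclideanSpace.single i 1, 0) = -(EuclideanSpace.single i 1, 0) := h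
    rw [this, D2_neg_dir]

theorem AH.mono {n : ℕ} {a : ℝ} {u : En n × ℝ → ℝ} {Ω Ω' : Set (En n × ℝ)}
    (hu : AH a u Ω) (h : Ω' ⊆ Ω) : AH a u Ω' := fun p hp => hu p (h hp)

theorem AH.neg {n : ℕ} {a : ℝ} {u : En n × ℝ → ℝ} {Ω : Set (En n × ℝ)}
    (hu : AH a u Ω) : AH a (fun p => - u p) Ω := by
  have h := (hu.sub hu).sub hu
  simpa using h

theorem AH.shift {n : ℕ} {a : ℝ} {u : En n × ℝ → ℝ} {Ω Ω' : Set (En n × ℝ)}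
    (hu : AH a u Ω) (i : Fin n) (t : ℝ) (hm : ∀ p ∈ Ω', p + t • eX i ∈ Ω) :
    AH a (fun p => u (p + t • eX i)) Ω' :=
  hu.comp_aff (ContinuousLinearMap.id ℝ _) (t • eX i) hm (by simp [eX]) (by simp) (by simp)

/-- reflection -/
def Rf {n : ℕ} (j : Fin n) (c : ℝ) (p : En n × ℝ) : En n × ℝ := p - (2 * (p.1 j - c)) • eX j

theorem AH.refl {n : ℕ} {a : ℝ} {u : En n × ℝ → ℝ} {Ω Ω' : Set (En n × ℝ)}
    (hu : AH a u Ω) (j : Fin n) (c : ℝ) (hm : ∀ p ∈ Ω', Rf j c p ∈ Ω) :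
    AH a (fun p => u (Rf j c p)) Ω' := by
  let T : En n × ℝ →L[ℝ] En n × ℝ := ContinuousLinearMap.id ℝ _ - (2:ℝ) • (cX j).smulRight (eX j)
  have hT : ∀ p, T p + (2 * c) • eX j = Rf j c p := by
    intro p
    simp only [T, Rf, sub_apply, ContinuousLinearMap.id_apply, smul_apply, ContinuousLinearMap.smulRight_apply, cX_apply]
    module
  have := hu.comp_aff (Ω' := Ω') T ((2 * c) • eX j) (fun p hp => by rw [hT]; exact hm p hp)
    (fun p => by rw [hT]; simp [Rf, eX]) (fun i => ?_) ?_
  · simpa only [hT] using this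
  · simp only [T, sub_apply, ContinuousLinearMap.id_apply, smul_apply, ContinuousLinearMap.smulRight_apply, cX_eX]
    by_cases h : j = i
    · subst h; right; simp; module
    · left; simp [h]
  · simp [T, cX_apply]

theorem norm_Rf {n : ℕ} (j : Fin n) (X p : En n × ℝ) :
    ‖Rf j (X.1 j) p - X‖ = ‖p - X‖ := by
  have h : ‖(Rf j (X.1 j) p - X).1‖ = ‖(p - X).1‖ := by
    rw [← sq_eq_sq₀ (norm_nonneg _) (norm_nonneg _), EuclideanSpace.real_norm_sq_eq,
      EuclideanSpace.real_norm_sq_eq]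
    refine Finset.sum_congr rfl fun i _ => ?_
    by_cases hi : i = j
    · subst hi
      simp [Rf, eX]; ring
    · simp [Rf, eX, hi]
  have h2 : (Rf j (X.1 j) p - X).2 = (p - X).2 := by simp [Rf, eX]
  rw [Prod.norm_def, Prod.norm_def, h, h2]

theorem continuous_Rf {n : ℕ} (j : Fin n) (c : ℝ) : Continuous (Rf (n := n) j c) := by
  have : Rf (n := n) j c = fun p => p - (2 * (cX j p - c)) • eX j := rfl
  rw [this]; fun_prop

theorem Rf_snd {n : ℕ} (j : Fin n) (c : ℝ) (p : En n × ℝ) : (Rf j c p).2 = p.2 := by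
  simp [Rf, eX]

theorem deriv_quad (A c : ℝ) : deriv (fun t : ℝ => A * (t - c) ^ 2) = fun t => 2 * A * (t - c) := by
  ext t
  have : HasDerivAt (fun t : ℝ => A * (t - c) ^ 2) (A * ((2:ℕ) * (t - c) ^ 1 * 1)) t :=
    (((hasDerivAt_id t).sub_const c).pow 2).const_mul A
  rw [this.deriv]; push_cast; ring

theorem deriv2_quad (A c t : ℝ) : deriv (deriv (fun t : ℝ => A * (t - c) ^ 2)) t = 2 * A := by
  rw [deriv_quad]
  have : HasDerivAt (fun t : ℝ => 2 * A * (t - c)) (2 * A * 1) t :=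
    ((hasDerivAt_id t).sub_const c).const_mul (2 * A)
  rw [this.deriv]; ring

theorem deriv2_quad' (B A c t : ℝ) :
    deriv (deriv (fun t : ℝ => B * (t - c) + A * (t - c) ^ 2)) t = 2 * A := by
  have h1 : deriv (fun t : ℝ => B * (t - c) + A * (t - c) ^ 2) = fun t => B + 2 * A * (t - c) := by
    ext t
    have : HasDerivAt (fun t : ℝ => B * (t - c) + A * (t - c) ^ 2)
        (B * 1 + A * ((2:ℕ) * (t - c) ^ 1 * 1)) t :=
      (((hasDerivAt_id t).sub_const c).const_mul B).add
      ((((hasDerivAt_id t).sub_const c).pow 2).const_mul A)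
    rw [this.deriv]; push_cast; ring
  rw [h1]
  have : HasDerivAt (fun t : ℝ => B + 2 * A * (t - c)) (2 * A * 1) t :=
    (((hasDerivAt_id t).sub_const c).const_mul (2 * A)).const_add B
  rw [this.deriv]; ring

theorem isCompact_region {n : ℕ} (X : En n × ℝ) (r : ℝ) (S : Set (En n × ℝ)) (hS : IsClosed S) :
    IsCompact (Metric.closedBall X r ∩ S) := (isCompact_closedBall X r).inter_right hS

theorem lip_one_sided {n : ℕ} {a : ℝ} (ha0 : 0 ≤ a) (ha1 : a ≤ 1) {u : En n × ℝ → ℝ}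
    {X : En n × ℝ} (hX : 0 ≤ X.2) {ρ M Λ : ℝ} (hρ : 0 < ρ) (hM : 0 < M) (hΛ : 0 ≤ Λ) (j : Fin n)
    (hc : ContinuousOn u {p | ‖p - X‖ ≤ ρ ∧ 0 ≤ p.2})
    (hu : AH a u {p | ‖p - X‖ < ρ ∧ 0 < p.2})
    (hb : ∀ p, ‖p - X‖ ≤ ρ → 0 ≤ p.2 → |u p| ≤ M)
    (ht : ∀ p, ‖p - X‖ ≤ ρ → p.2 = 0 → X.1 j ≤ p.1 j →
      |u p - u (Rf j (X.1 j) p)| ≤ Λ * (p.1 j - X.1 j))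
    {h : ℝ} (hh0 : 0 ≤ h) (hh : h ≤ ρ) :
    u (X + h • eX j) - u (X - h • eX j) ≤ (2 * (n + 3) * M / ρ + Λ) * h := by
  set A := 2 * M / ρ ^ 2 with hA
  have hApos : 0 < A := by positivity
  set D := (n + 2) * A with hD
  set B := (A + D) * ρ + Λ with hB
  let α : Fin n → ℝ → ℝ := fun i => if i = j then fun t => B * (t - X.1 i) + (-D) * (t - X.1 i) ^ 2
    else fun t => A * (t - X.1 i) ^ 2
  let β : ℝ → ℝ := fun t => A * (t - X.2) ^ 2
  have hαC : ∀ i t, ContDiffAt ℝ 2 (α i) t := by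
    intro i t
    by_cases hi : i = j
    · simp only [α, hi, if_true]; fun_prop
    · simp only [α, hi, if_false]; fun_prop
  have hβC : ∀ t, ContDiffAt ℝ 2 β t := by intro t; simp only [β]; fun_prop
  -- value of the barrier
  have hval : ∀ p : En n × ℝ, sepf α β p = A * ‖p.1 - X.1‖ ^ 2 + A * (p.2 - X.2) ^ 2
      + B * (p.1 j - X.1 j) - (A + D) * (p.1 j - X.1 j) ^ 2 := by
    intro p
    have h1 : ∀ i, α i (p.1 i) = A * (p.1 i - X.1 i) ^ 2 +
        if i = j then B * (p.1 i - X.1 i) - (A + D) * (p.1 i - X.1 i) ^ 2 else 0 := by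
      intro i
      by_cases hi : i = j
      · simp only [α, hi, if_true]; ring
      · simp only [α, hi, if_false]; ring
    simp only [sepf, h1, Finset.sum_add_distrib, Finset.sum_ite_eq', Finset.mem_univ, if_true, β]
    rw [EuclideanSpace.real_norm_sq_eq, Finset.mul_sum]
    simp
    ring
  set K : Set (En n × ℝ) := {p | ‖p - X‖ ≤ ρ ∧ 0 ≤ p.2 ∧ X.1 j ≤ p.1 j} with hKdef
  set O : Set (En n × ℝ) := {p | ‖p - X‖ < ρ ∧ 0 < p.2 ∧ X.1 j < p.1 j} with hOdef
  have hcj : Continuous fun p : En n × ℝ => p.1 j := (cX j).continuous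
  have hK : IsCompact K := by
    have := isCompact_region X ρ {p | 0 ≤ p.2 ∧ X.1 j ≤ p.1 j}
      ((isClosed_le continuous_const continuous_snd).inter (isClosed_le continuous_const hcj))
    convert this using 1
    ext p; simp [K, dist_eq_norm]
  have hO : IsOpen O := by
    have h0 : IsOpen {p : En n × ℝ | ‖p - X‖ < ρ} := isOpen_lt (by fun_prop) continuous_const
    exact h0.inter ((isOpen_lt continuous_const continuous_snd).inter (isOpen_lt continuous_const hcj))
  have hR : AH a (fun p => u (Rf j (X.1 j) p)) {p | ‖p - X‖ < ρ ∧ 0 < p.2} :=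
    hu.refl j _ (fun p hp => by
      simp only [mem_ofPred_eq, norm_Rf, Rf_snd]; exact hp)
  have hW := hu.sub hR
  have key := max_principle a (w := fun p => (u p - u (Rf j (X.1 j) p)) - sepf α β p) hK hO
    (fun p hp => ⟨hp.1.le, hp.2.1.le, hp.2.2.le⟩) ?_ ?_ ?_ ?_
  · have hp : X + h • eX j ∈ K := by
      refine ⟨?_, by simpa [eX] using hX, by simpa [eX] using hh0⟩
      rw [add_sub_cancel_left, norm_smul]
      simp [eX, Prod.norm_def, abs_of_nonneg hh0, hh]
    have hk := key _ hp
    have e1 : Rf j (X.1 j) (X + h • eX j) = X - h • eX j := by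
      simp only [Rf]
      have : (X + h • eX j).1 j - X.1 j = h := by simp [eX]
      rw [this]; module
    have e2 := hval (X + h • eX j)
    simp only [e1] at hk
    have e3 : ‖(X + h • eX j).1 - X.1‖ = h := by
      simp [eX, norm_smul, abs_of_nonneg hh0]
    have e4 : (X + h • eX j).1 j - X.1 j = h := by simp [eX]
    have e5 : (X + h • eX j).2 - X.2 = 0 := by simp [eX]
    rw [e2, e3, e4, e5] at hk
    have e6 : B = 2 * (n + 3) * M / ρ + Λ := by
      rw [hB, hD, hA]; field_simp; ring
    rw [← e6]
    have : 0 ≤ D * h ^ 2 := by positivity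
    nlinarith
  · -- continuity
    refine ContinuousOn.sub (ContinuousOn.sub ?_ ?_) ?_
    · exact hc.mono fun p hp => ⟨hp.1, hp.2.1⟩
    · refine hc.comp (continuous_Rf j _).continuousOn fun p hp => ?_
      simp only [mem_ofPred_eq, norm_Rf, Rf_snd]; exact ⟨hp.1, hp.2.1⟩
    · intro p _
      exact (contDiffAt_sepf (fun i => hαC i _) (hβC _)).continuousAt.continuousWithinAt
  · intro p hp
    exact (hW p ⟨hp.1, hp.2.1⟩).1.sub (contDiffAt_sepf (fun i => hαC i _) (hβC _))
  · intro p hp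
    have h1 := hW p ⟨hp.1, hp.2.1⟩
    rw [Lop_sub a h1.1 (contDiffAt_sepf (fun i => hαC i _) (hβC _)), h1.2,
      Lop_sepf a (fun i => hαC i _) (hβC _)]
    have h2 : ∀ i, deriv (deriv (α i)) (p.1 i) = 2 * A + if i = j then - 2 * (A + D) else 0 := by
      intro i
      by_cases hi : i = j
      · simp only [α, hi, if_true, deriv2_quad']; ring
      · simp only [α, hi, if_false, deriv2_quad]; ring
    simp only [h2, β, deriv2_quad, Finset.sum_add_distrib, Finset.sum_ite_eq',
      Finset.mem_univ, if_true, Finset.sum_const, Finset.card_univ, Fintype.card_fin, nsmul_eq_mul]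
    rw [deriv_quad]
    simp only
    have hy : 0 < p.2 := hp.2.1
    have h3 : a / p.2 * (2 * A * (p.2 - X.2)) ≤ 2 * A := by
      rw [div_mul_eq_mul_div, div_le_iff₀ hy]
      have : a * (p.2 - X.2) ≤ p.2 := by nlinarith
      nlinarith
    rw [hD]
    nlinarith
  · intro p hp hpO
    simp only
    rw [hval, sub_nonpos]
    obtain ⟨hp1, hp2, hp3⟩ := hp
    have hx : ‖p.1 - X.1‖ ≤ ρ := (norm_fst_le (p - X)).trans hp1
    have hhp : p.1 j - X.1 j ≤ ρ := by
      have : |(p.1 - X.1) j| ≤ ‖p.1 - X.1‖ := by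
        simpa using PiLp.norm_apply_le (p.1 - X.1) j
      have h3 := (le_abs_self _).trans (this.trans hx)
      simpa using h3
    have hlow : Λ * (p.1 j - X.1 j) ≤ B * (p.1 j - X.1 j) - (A + D) * (p.1 j - X.1 j) ^ 2 := by
      have h0 : 0 ≤ p.1 j - X.1 j := by linarith
      have h1 : 0 ≤ A + D := by positivity
      rw [hB]
      nlinarith [mul_nonneg (mul_nonneg h1 h0) (sub_nonneg.2 hhp)]
    have hA1 : 0 ≤ A * ‖p.1 - X.1‖ ^ 2 := by positivity
    have hA2 : 0 ≤ A * (p.2 - X.2) ^ 2 := by positivity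
    have hΛh : 0 ≤ Λ * (p.1 j - X.1 j) := mul_nonneg hΛ (by linarith)
    rcases hp1.eq_or_lt with h1 | h1
    · have hM2 : u p - u (Rf j (X.1 j) p) ≤ 2 * M := by
        have b1 := abs_le.1 (hb p hp1 hp2)
        have b2 := abs_le.1 (hb (Rf j (X.1 j) p) (by rw [norm_Rf]; exact hp1) (by rw [Rf_snd]; exact hp2))
        linarith
      have hAρ : A * ρ ^ 2 = 2 * M := by rw [hA]; field_simp
      have : ρ ^ 2 ≤ ‖p.1 - X.1‖ ^ 2 + (p.2 - X.2) ^ 2 := by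
        rw [Prod.norm_def] at h1
        rcases max_choice ‖(p - X).1‖ ‖(p - X).2‖ with h | h
        · rw [h] at h1
          have : ‖p.1 - X.1‖ = ρ := h1
          rw [this]; nlinarith [sq_nonneg (p.2 - X.2)]
        · rw [h] at h1
          have : |p.2 - X.2| = ρ := h1
          rw [← sq_abs (p.2 - X.2), this]; nlinarith [sq_nonneg ‖p.1 - X.1‖]
      nlinarith
    · rcases hp2.eq_or_lt with h2 | h2
      · have := (abs_le.1 (ht p hp1 h2.symm hp3)).2
        linarith
      · rcases hp3.eq_or_lt with h3 | h3
        · have : Rf j (X.1 j) p = p := by simp [Rf, h3]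
          rw [this, sub_self]; linarith
        · exact absurd ⟨h1, h2, h3⟩ hpO

theorem lip_est {n : ℕ} {a : ℝ} (ha0 : 0 ≤ a) (ha1 : a ≤ 1) {u : En n × ℝ → ℝ}
    {X : En n × ℝ} (hX : 0 ≤ X.2) {ρ M Λ : ℝ} (hρ : 0 < ρ) (hΛ : 0 ≤ Λ) (j : Fin n)
    (hc : ContinuousOn u {p | ‖p - X‖ ≤ ρ ∧ 0 ≤ p.2})
    (hu : AH a u {p | ‖p - X‖ < ρ ∧ 0 < p.2})
    (hb : ∀ p, ‖p - X‖ ≤ ρ → 0 ≤ p.2 → |u p| ≤ M)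
    (ht : ∀ p, ‖p - X‖ ≤ ρ → p.2 = 0 → X.1 j ≤ p.1 j →
      |u p - u (Rf j (X.1 j) p)| ≤ Λ * (p.1 j - X.1 j))
    {h : ℝ} (hh0 : 0 ≤ h) (hh : h ≤ ρ) :
    |u (X + h • eX j) - u (X - h • eX j)| ≤ (2 * (n + 3) * M / ρ + Λ) * h := by
  have hM : 0 ≤ M := (abs_nonneg _).trans (hb X (by simpa using hρ.le) hX)
  apply le_of_forall_pos_le_add
  intro ε hε
  set δ := ε / (2 * (n + 3)) with hδ
  have hδp : 0 < δ := by positivity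
  have hfin : (2 * (n + 3) * (M + δ) / ρ + Λ) * h ≤ (2 * (n + 3) * M / ρ + Λ) * h + ε := by
    have : (2 * (n + 3) * (M + δ) / ρ + Λ) * h = (2 * (n + 3) * M / ρ + Λ) * h + ε * (h / ρ) := by
      rw [hδ]; field_simp; ring
    rw [this]
    have : h / ρ ≤ 1 := (div_le_one hρ).2 hh
    nlinarith
  refine le_trans ?_ hfin
  rw [abs_le]
  constructor
  · have := lip_one_sided (u := fun p => - u p) (M := M + δ) ha0 ha1 hX hρ (by linarith) hΛ j hc.neg hu.neg
      (fun p h1 h2 => by rw [abs_neg]; linarith [hb p h1 h2])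
      (fun p h1 h2 h3 => by
        have e : -u p - -u (Rf j (X.1 j) p) = -(u p - u (Rf j (X.1 j) p)) := by ring
        rw [e, abs_neg]; exact ht p h1 h2 h3) hh0 hh
    linarith
  · exact lip_one_sided (M := M + δ) ha0 ha1 hX hρ (by linarith) hΛ j hc hu
      (fun p h1 h2 => by linarith [hb p h1 h2]) ht hh0 hh

theorem pow_barrier_deriv {a B D c y0 t : ℝ} (ht : y0 < t) :
    HasDerivAt (fun t => c + B * (t - y0) ^ (1 - a) + (-D) * (t - y0) ^ 2)
      (B * (1 - a) * (t - y0) ^ (-a) - 2 * D * (t - y0)) t := by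
  have h0 : HasDerivAt (fun t : ℝ => t - y0) 1 t := (hasDerivAt_id t).sub_const y0
  have hne : t - y0 ≠ 0 := by linarith
  have h1 := h0.rpow_const (p := 1 - a) (Or.inl hne)
  have h2 := ((h1.const_mul B).const_add c).add ((h0.pow 2).const_mul (-D))
  refine HasDerivAt.congr_deriv (f := fun t => c + B * (t - y0) ^ (1 - a) + (-D) * (t - y0) ^ 2) h2 ?_
  rw [show (1 - a - 1) = -a by ring]
  push_cast; ring

theorem pow_barrier_deriv2 {a B D c y0 t : ℝ} (ht : y0 < t) :
    deriv (deriv (fun t => c + B * (t - y0) ^ (1 - a) + (-D) * (t - y0) ^ 2)) t =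
      - (B * (1 - a) * a * (t - y0) ^ (-a - 1)) - 2 * D := by
  have hev : deriv (fun t => c + B * (t - y0) ^ (1 - a) + (-D) * (t - y0) ^ 2) =ᶠ[𝓝 t]
      fun t => B * (1 - a) * (t - y0) ^ (-a) - 2 * D * (t - y0) := by
    filter_upwards [lt_mem_nhds ht] with z hz
    exact (pow_barrier_deriv hz).deriv
  rw [hev.deriv_eq]
  have h0 : HasDerivAt (fun t : ℝ => t - y0) 1 t := (hasDerivAt_id t).sub_const y0
  have hne : t - y0 ≠ 0 := by linarith
  have h1 := h0.rpow_const (p := -a) (Or.inl hne)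
  have h2 : HasDerivAt (fun t => B * (1 - a) * (t - y0) ^ (-a) - 2 * D * (t - y0)) _ t :=
    (h1.const_mul (B * (1 - a))).sub (h0.const_mul (2 * D))
  rw [h2.deriv]
  ring

set_option maxHeartbeats 1000000 in
theorem y_modulus_one {n : ℕ} {a : ℝ} (ha0 : 0 < a) (ha1 : a < 1) {u : En n × ℝ → ℝ}
    {X : En n × ℝ} (hX : 0 < X.2) {ρ M C1 θ : ℝ} (hρ : 0 < ρ) (hM : 0 < M)
    (hθ : 0 < θ)
    (hc : ContinuousOn u {p | ‖p - X‖ ≤ ρ ∧ X.2 ≤ p.2})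
    (hu : AH a u {p | ‖p - X‖ < ρ ∧ X.2 < p.2})
    (hb : ∀ p, ‖p - X‖ ≤ ρ → X.2 ≤ p.2 → |u p| ≤ M)
    (hl : ∀ p, ‖p - X‖ ≤ ρ → p.2 = X.2 → |u p - u X| ≤ C1 * M / ρ * ‖p.1 - X.1‖)
    (p : En n × ℝ) (hp1 : ‖p - X‖ ≤ ρ) (hp2 : X.2 ≤ p.2) :
    u p - u X ≤ M * (θ + (2 + C1 ^ 2 / (4 * θ)) * (‖p.1 - X.1‖ / ρ) ^ 2 +
      (2 + (n + 1) * (2 + C1 ^ 2 / (4 * θ))) * ((p.2 - X.2) / ρ) ^ (1 - a)) := by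
  set C2 := 2 + C1 ^ 2 / (4 * θ) with hC2
  have hC2p : 2 ≤ C2 := by rw [hC2]; have : 0 ≤ C1 ^ 2 / (4 * θ) := by positivity
                           linarith
  set C3 := 2 + (n + 1) * C2 with hC3
  have hC3p : 0 < C3 := by positivity
  set A := C2 * M / ρ ^ 2 with hA
  have hAp : 0 < A := by positivity
  set D := (n + 1) * A with hD
  have hDp : 0 < D := by positivity
  set B := C3 * M / ρ ^ (1 - a) with hB
  have hBp : 0 < B := by positivity
  have hAρ : A * ρ ^ 2 = C2 * M := by rw [hA]; field_simp
  have hBρ : B * ρ ^ (1 - a) = C3 * M := by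
    rw [hB]; have : 0 < ρ ^ (1 - a) := by positivity
    field_simp
  let α : Fin n → ℝ → ℝ := fun i t => A * (t - X.1 i) ^ 2
  let β : ℝ → ℝ := fun t => (u X + θ * M) + B * (t - X.2) ^ (1 - a) + (-D) * (t - X.2) ^ 2
  have hαC : ∀ i t, ContDiffAt ℝ 2 (α i) t := by
    intro i t; simp only [α]; fun_prop
  have hβC : ∀ t, X.2 < t → ContDiffAt ℝ 2 β t := by
    intro t ht
    simp only [β]
    have h0 : ContDiffAt ℝ 2 (fun t : ℝ => t - X.2) t := by fun_prop
    have h1 : ContDiffAt ℝ 2 (fun t : ℝ => (t - X.2) ^ (1 - a)) t :=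
      h0.rpow_const_of_ne (by linarith)
    exact (contDiffAt_const.add (contDiffAt_const.mul h1)).add (by fun_prop)
  have hval : ∀ p : En n × ℝ, sepf α β p = A * ‖p.1 - X.1‖ ^ 2 + (u X + θ * M)
      + B * (p.2 - X.2) ^ (1 - a) - D * (p.2 - X.2) ^ 2 := by
    intro p
    simp only [sepf, α, β]
    rw [EuclideanSpace.real_norm_sq_eq, Finset.mul_sum]
    simp
    ring
  have hcont : Continuous (sepf α β) := by
    have : sepf α β = fun p => A * ‖p.1 - X.1‖ ^ 2 + (u X + θ * M)
      + B * (p.2 - X.2) ^ (1 - a) - D * (p.2 - X.2) ^ 2 := funext hval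
    rw [this]
    have h1 : Continuous fun p : En n × ℝ => (p.2 - X.2) ^ (1 - a) :=
      Continuous.rpow_const (by fun_prop) (fun _ => Or.inr (by linarith))
    fun_prop
  set K : Set (En n × ℝ) := {p | ‖p - X‖ ≤ ρ ∧ X.2 ≤ p.2} with hKdef
  set O : Set (En n × ℝ) := {p | ‖p - X‖ < ρ ∧ X.2 < p.2} with hOdef
  have hK : IsCompact K := by
    have := isCompact_region X ρ {p | X.2 ≤ p.2} (isClosed_le continuous_const continuous_snd)
    convert this using 1
    ext p; simp [K, dist_eq_norm]
  have hO : IsOpen O := by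
    have h0 : IsOpen {p : En n × ℝ | ‖p - X‖ < ρ} := isOpen_lt (by fun_prop) continuous_const
    exact h0.inter (isOpen_lt continuous_const continuous_snd)
  have key := max_principle a (w := fun p => u p - sepf α β p) hK hO
    (fun p hp => ⟨hp.1.le, hp.2.le⟩) (hc.sub hcont.continuousOn) ?_ ?_ ?_
  · have hk := key p ⟨hp1, hp2⟩
    rw [hval] at hk
    have e1 : M * (C2 * (‖p.1 - X.1‖ / ρ) ^ 2) = A * ‖p.1 - X.1‖ ^ 2 := by
      rw [hA]; field_simp
    have e2 : M * (C3 * ((p.2 - X.2) / ρ) ^ (1 - a)) = B * (p.2 - X.2) ^ (1 - a) := by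
      rw [hB, Real.div_rpow (by linarith) hρ.le]; field_simp
    have : 0 ≤ D * (p.2 - X.2) ^ 2 := by positivity
    rw [mul_add, mul_add, e1, e2]
    linarith
  · intro p hp
    exact (hu p hp).1.sub (contDiffAt_sepf (fun i => hαC i _) (hβC _ hp.2))
  · intro p hp
    have h1 := hu p hp
    rw [Lop_sub a h1.1 (contDiffAt_sepf (fun i => hαC i _) (hβC _ hp.2)), h1.2,
      Lop_sepf a (fun i => hαC i _) (hβC _ hp.2)]
    simp only [α, β, deriv2_quad, pow_barrier_deriv2 hp.2, (pow_barrier_deriv hp.2).deriv,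
      Finset.sum_const, Finset.card_univ, Fintype.card_fin, nsmul_eq_mul]
    have hy : 0 < p.2 := hX.trans hp.2
    have ht : 0 < p.2 - X.2 := sub_pos.2 hp.2
    have e1 : (p.2 - X.2) ^ (-a) = (p.2 - X.2) * (p.2 - X.2) ^ (-a - 1) := by
      rw [Real.rpow_sub_one ht.ne']; field_simp
    have hq : 0 < (p.2 - X.2) ^ (-a - 1) := by positivity
    have e2 : a / p.2 * (B * (1 - a) * (p.2 - X.2) ^ (-a) - 2 * D * (p.2 - X.2)) ≤
        B * (1 - a) * a * (p.2 - X.2) ^ (-a - 1) := by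
      rw [e1, div_mul_eq_mul_div, div_le_iff₀ hy]
      have h5 : 0 ≤ B * (1 - a) * a * (p.2 - X.2) ^ (-a - 1) := by
        have : 0 < 1 - a := by linarith
        positivity
      have h6 : 0 ≤ a * (2 * D * (p.2 - X.2)) := by positivity
      nlinarith [mul_nonneg h5 hX.le]
    have : (n:ℝ) * (2 * A) < 2 * D := by rw [hD]; linarith
    linarith
  · intro p hp hpO
    rw [hval, sub_nonpos]
    obtain ⟨hp1, hp2⟩ := hp
    have ht0 : 0 ≤ p.2 - X.2 := by linarith
    have htρ : p.2 - X.2 ≤ ρ := by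
      have := (norm_snd_le (p - X)).trans hp1
      exact (le_abs_self _).trans this
    have hpow : (p.2 - X.2) ^ 2 ≤ (p.2 - X.2) ^ (1 - a) * ρ ^ (1 + a) := by
      rcases ht0.eq_or_lt with h | h
      · rw [← h]; simp; positivity
      have : (p.2 - X.2) ^ 2 = (p.2 - X.2) ^ (1 - a) * (p.2 - X.2) ^ (1 + a) := by
        rw [← Real.rpow_add h, ← Real.rpow_natCast]; norm_num
      rw [this]
      gcongr
    have hρ2 : ρ ^ (1 - a) * ρ ^ (1 + a) = ρ ^ 2 := by
      rw [← Real.rpow_add hρ, ← Real.rpow_natCast]; norm_num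
    have hDρ : D * ρ ^ (1 + a) ≤ B := by
      have : 0 < ρ ^ (1 - a) := by positivity
      rw [← mul_le_mul_iff_left₀ this, hBρ, mul_assoc, mul_comm (ρ ^ (1 + a)), hρ2, hD, mul_assoc, hAρ, hC3]
      nlinarith
    have hBD : 0 ≤ B * (p.2 - X.2) ^ (1 - a) - D * (p.2 - X.2) ^ 2 := by
      have h1 : 0 ≤ (p.2 - X.2) ^ (1 - a) := by positivity
      nlinarith [mul_le_mul_of_nonneg_left hpow hDp.le, mul_le_mul_of_nonneg_left hDρ h1]
    have hM2 : u p ≤ u X + 2 * M := by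
      have b1 := abs_le.1 (hb p hp1 hp2)
      have b2 := abs_le.1 (hb X (by simpa using hρ.le) le_rfl)
      linarith
    have hθM : 0 < θ * M := by positivity
    have hA1 : 0 ≤ A * ‖p.1 - X.1‖ ^ 2 := by positivity
    rcases hp1.eq_or_lt with h1 | h1
    · rw [Prod.norm_def] at h1
      rcases max_choice ‖(p - X).1‖ ‖(p - X).2‖ with h | h
      · rw [h] at h1
        have : ‖p.1 - X.1‖ = ρ := h1
        rw [this, hAρ]
        have := mul_le_mul_of_nonneg_right hC2p hM.le
        linarith
      · rw [h] at h1
        have : |p.2 - X.2| = ρ := h1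
        rw [abs_of_nonneg ht0] at this
        rw [this, hBρ]
        have : D * ρ ^ 2 = (n + 1) * C2 * M := by rw [hD, mul_assoc, hAρ]; ring
        rw [this, hC3]; linarith
    · rcases hp2.eq_or_lt with h2 | h2
      · have h3 := (abs_le.1 (hl p hp1 h2.symm)).2
        have h4 : C1 * M / ρ * ‖p.1 - X.1‖ ≤ θ * M + A * ‖p.1 - X.1‖ ^ 2 := by
          set z := ‖p.1 - X.1‖ / ρ with hz
          have e : C1 * M / ρ * ‖p.1 - X.1‖ = M * (C1 * z) := by rw [hz]; field_simp
          have e' : A * ‖p.1 - X.1‖ ^ 2 = M * (C2 * z ^ 2) := by rw [hz, hA]; field_simp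
          rw [e, e']
          have : C1 * z ≤ θ + C2 * z ^ 2 := by
            have e3 : θ + C1 ^ 2 / (4 * θ) * z ^ 2 - C1 * z = (2 * θ - C1 * z) ^ 2 / (4 * θ) := by
              field_simp; ring
            have e4 : 0 ≤ (2 * θ - C1 * z) ^ 2 / (4 * θ) := by positivity
            rw [hC2]; nlinarith [sq_nonneg z]
          have := mul_le_mul_of_nonneg_left this hM.le
          linarith
        linarith
      · exact absurd ⟨h1, h2⟩ hpO

theorem y_modulus {n : ℕ} {a : ℝ} (ha0 : 0 < a) (ha1 : a < 1) {u : En n × ℝ → ℝ}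
    {X : En n × ℝ} (hX : 0 < X.2) {ρ M C1 θ : ℝ} (hρ : 0 < ρ) (hM : 0 < M)
    (hθ : 0 < θ)
    (hc : ContinuousOn u {p | ‖p - X‖ ≤ ρ ∧ X.2 ≤ p.2})
    (hu : AH a u {p | ‖p - X‖ < ρ ∧ X.2 < p.2})
    (hb : ∀ p, ‖p - X‖ ≤ ρ → X.2 ≤ p.2 → |u p| ≤ M)
    (hl : ∀ p, ‖p - X‖ ≤ ρ → p.2 = X.2 → |u p - u X| ≤ C1 * M / ρ * ‖p.1 - X.1‖)
    (p : En n × ℝ) (hp1 : ‖p - X‖ ≤ ρ) (hp2 : X.2 ≤ p.2) :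
    |u p - u X| ≤ M * (θ + (2 + C1 ^ 2 / (4 * θ)) * (‖p.1 - X.1‖ / ρ) ^ 2 +
      (2 + (n + 1) * (2 + C1 ^ 2 / (4 * θ))) * ((p.2 - X.2) / ρ) ^ (1 - a)) := by
  have h1 := y_modulus_one ha0 ha1 hX hρ hM hθ hc hu hb hl p hp1 hp2
  have h2 := y_modulus_one (u := fun p => - u p) ha0 ha1 hX hρ hM hθ hc.neg hu.neg
    (fun p h1 h2 => by rw [abs_neg]; exact hb p h1 h2)
    (fun p h1 h2 => by
      have e : -u p - -u X = -(u p - u X) := by ring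
      rw [e, abs_neg]; exact hl p h1 h2) p hp1 hp2
  rw [abs_le]; constructor <;> linarith

theorem symm_deriv_bound {φ : ℝ → ℝ} {d C h0 : ℝ} (hd : HasDerivAt φ d 0) (hh0 : 0 < h0)
    (hb : ∀ h, 0 ≤ h → h ≤ h0 → |φ h - φ (-h)| ≤ C * h) : |d| ≤ C / 2 := by
  have h1 : HasDerivAt (fun h => φ h - φ (-h)) (2 * d) 0 := by
    have h2 : HasDerivAt (fun h : ℝ => φ (-h)) (-d) 0 := by
      have h3 : HasDerivAt φ d (-(0:ℝ)) := by simpa using hd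
      have h4 : HasDerivAt (fun h : ℝ => φ (-h)) (d * -1) 0 := h3.comp (0:ℝ) (hasDerivAt_neg (0:ℝ))
      exact h4.congr_deriv (by ring)
    exact HasDerivAt.congr_deriv (f := fun h => φ h - φ (-h)) (hd.sub h2) (by ring)
  have h2 := h1.tendsto_slope_zero_right
  have h3 : |2 * d| ≤ C := by
    refine le_of_tendsto h2.abs ?_
    filter_upwards [Ioo_mem_nhdsGT hh0] with t ht
    have h4 := hb t ht.1.le ht.2.le
    simp only [zero_add, neg_zero, sub_self, sub_zero, smul_eq_mul, abs_mul, abs_inv]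
    rw [abs_of_pos ht.1, inv_mul_le_iff₀ ht.1]
    linarith
  rw [abs_mul, abs_of_pos (by norm_num : (0:ℝ) < 2)] at h3
  linarith

theorem clm_norm_le {n : ℕ} {ℓ : En n →L[ℝ] ℝ} {c : ℝ} (hc : 0 ≤ c)
    (h : ∀ i, |ℓ (EuclideanSpace.single i 1)| ≤ c) : ‖ℓ‖ ≤ n * c := by
  refine ℓ.opNorm_le_bound (by positivity) fun x => ?_
  have hx : x = ∑ i, x i • EuclideanSpace.single i (1:ℝ) := by
    ext k; simp [Pi.single_apply]
  conv_lhs => rw [hx]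
  rw [map_sum]
  calc ‖∑ i, ℓ (x i • EuclideanSpace.single i (1:ℝ))‖
      ≤ ∑ i, ‖ℓ (x i • EuclideanSpace.single i (1:ℝ))‖ := norm_sum_le _ _
    _ ≤ ∑ i : Fin n, c * ‖x‖ := by
        refine Finset.sum_le_sum fun i _ => ?_
        rw [map_smul, norm_smul, mul_comm]
        exact mul_le_mul (h i) (PiLp.norm_apply_le x i) (norm_nonneg _) hc
    _ = n * c * ‖x‖ := by simp; ring

/-- standing assumptions -/
structure Dat {n : ℕ} (a : ℝ) (u : En n × ℝ → ℝ) (f' : En n → (En n →L[ℝ] ℝ)) (M0 M1 M2 : ℝ) :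
    Prop where
  hc : ContinuousOn u {p | ‖p‖ ≤ 7/10 ∧ 0 ≤ p.2}
  hu : AH a u {p | ‖p‖ < 7/10 ∧ 0 < p.2}
  hf : ∀ x : En n, ‖x‖ < 1 → HasFDerivAt (fun z => u (z, 0)) (f' x) x
  h0 : ∀ x : En n, ‖x‖ < 1 → |u (x, 0)| ≤ M0
  h1 : ∀ x : En n, ‖x‖ < 1 → ‖f' x‖ ≤ M1
  h2 : ∀ x : En n, ‖x‖ < 1 → ∀ x' : En n, ‖x'‖ < 1 → ‖f' x - f' x'‖ ≤ M2 * ‖x - x'‖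
  p0 : 0 ≤ M0
  p1 : 0 ≤ M1
  p2 : 0 ≤ M2
  ha0 : 0 < a
  ha1 : a < 1

theorem Dat.trace1 {n : ℕ} {a : ℝ} {u : En n × ℝ → ℝ} {f' : En n → (En n →L[ℝ] ℝ)} {M0 M1 M2 : ℝ}
    (H : Dat a u f' M0 M1 M2) {p q : En n × ℝ} (hp : ‖p‖ < 1) (hq : ‖q‖ < 1) (hp2 : p.2 = 0)
    (hq2 : q.2 = 0) : |u p - u q| ≤ M1 * ‖p.1 - q.1‖ := by
  have := (convex_ball (0 : En n) 1).norm_image_sub_le_of_norm_hasFDerivWithin_le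
    (f := fun z => u (z, 0)) (f' := f') (C := M1) (x := q.1) (y := p.1)
    (fun x hx => (H.hf x (by simpa using hx)).hasFDerivWithinAt)
    (fun x hx => H.h1 x (by simpa using hx))
    (by simpa using (norm_fst_le q).trans_lt hq) (by simpa using (norm_fst_le p).trans_lt hp)
  have ep : p = (p.1, 0) := by rw [← hp2]
  have eq : q = (q.1, 0) := by rw [← hq2]
  rw [ep, eq]
  exact this

theorem Dat.lip {n : ℕ} {a : ℝ} {u : En n × ℝ → ℝ} {f' : En n → (En n →L[ℝ] ℝ)} {M0 M1 M2 : ℝ}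
    (H : Dat a u f' M0 M1 M2) {X : En n × ℝ} {ρ M : ℝ} (hρ : 0 < ρ) (hX : ‖X‖ + ρ ≤ 7/10)
    (hX2 : 0 ≤ X.2) (hb : ∀ p, ‖p - X‖ ≤ ρ → 0 ≤ p.2 → |u p| ≤ M) (j : Fin n) {h : ℝ}
    (hh0 : 0 ≤ h) (hh : h ≤ ρ) :
    |u (X + h • eX j) - u (X - h • eX j)| ≤ (2 * (n + 3) * M / ρ + 2 * M1) * h := by
  have hn : ∀ p : En n × ℝ, ‖p‖ ≤ ‖p - X‖ + ‖X‖ := fun p => by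
    simpa using norm_add_le (p - X) X
  refine lip_est H.ha0.le H.ha1.le hX2 hρ (by linarith [H.p1]) j
    (H.hc.mono fun p hp => ⟨by linarith [hn p, hp.1], hp.2⟩)
    (H.hu.mono fun p hp => ⟨by linarith [hn p, hp.1], hp.2⟩) hb ?_ hh0 hh
  intro p hp hp2 hpj
  have h1 := H.trace1 (p := p) (q := Rf j (X.1 j) p) (by linarith [hn p])
    (by have := hn (Rf j (X.1 j) p); rw [norm_Rf] at this; linarith) hp2 (by rw [Rf_snd, hp2])
  have h2 : ‖p.1 - (Rf j (X.1 j) p).1‖ = 2 * (p.1 j - X.1 j) := by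
    have : p.1 - (Rf j (X.1 j) p).1 = (2 * (p.1 j - X.1 j)) • EuclideanSpace.single j (1:ℝ) := by
      simp [Rf, eX]
    rw [this, norm_smul, Real.norm_of_nonneg (by linarith)]
    simp
  rw [h2] at h1
  linarith

theorem hasDerivAt_line {n : ℕ} {φ : En n × ℝ → ℝ} {X v : En n × ℝ} (h : DifferentiableAt ℝ φ X) :
    HasDerivAt (fun t : ℝ => φ (X + t • v)) (fderiv ℝ φ X v) 0 := by
  have hl : HasDerivAt (fun t : ℝ => X + t • v) v 0 := by
    simpa using ((hasDerivAt_id (0:ℝ)).smul_const v).const_add X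
  have h' : HasFDerivAt φ (fderiv ℝ φ X) (X + (0:ℝ) • v) := by simpa using h.hasFDerivAt
  exact h'.comp_hasDerivAt (0:ℝ) hl

theorem fderiv_bound_of_symm {n : ℕ} {φ : En n × ℝ → ℝ} {X v : En n × ℝ} {C h0 : ℝ}
    (h : DifferentiableAt ℝ φ X) (hh0 : 0 < h0)
    (hb : ∀ h, 0 ≤ h → h ≤ h0 → |φ (X + h • v) - φ (X - h • v)| ≤ C * h) :
    |fderiv ℝ φ X v| ≤ C / 2 := by
  refine symm_deriv_bound (hasDerivAt_line (v := v) h) hh0 fun t h1 h2 => ?_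
  have := hb t h1 h2
  rwa [neg_smul, ← sub_eq_add_neg]

theorem Dat.grad {n : ℕ} {a : ℝ} {u : En n × ℝ → ℝ} {f' : En n → (En n →L[ℝ] ℝ)} {M0 M1 M2 : ℝ}
    (H : Dat a u f' M0 M1 M2) {X : En n × ℝ} {ρ M : ℝ} (hρ : 0 < ρ) (hX : ‖X‖ + ρ ≤ 7/10)
    (hX2 : 0 < X.2) (hb : ∀ p, ‖p - X‖ ≤ ρ → 0 ≤ p.2 → |u p| ≤ M) (j : Fin n) :
    |fderiv ℝ u X (eX j)| ≤ (n + 3) * M / ρ + M1 := by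
  have := fderiv_bound_of_symm (v := eX j)
    ((H.hu X ⟨by linarith, hX2⟩).1.differentiableAt (by norm_num)) hρ
    (fun h h1 h2 => H.lip hρ hX hX2.le hb j h1 h2)
  calc _ ≤ _ := this
    _ = _ := by ring

theorem hasFDerivAt_slice {n : ℕ} {φ : En n × ℝ → ℝ} {x : En n} {y : ℝ}
    (h : DifferentiableAt ℝ φ (x, y)) :
    HasFDerivAt (fun z => φ (z, y)) ((fderiv ℝ φ (x, y)).comp (ContinuousLinearMap.inl ℝ (En n) ℝ)) x := by
  have h1 : HasFDerivAt (fun z : En n => (z, y)) (ContinuousLinearMap.inl ℝ (En n) ℝ) x :=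
    hasFDerivAt_prodMk_left x y
  exact HasFDerivAt.comp (g := φ) x h.hasFDerivAt h1

theorem Dat.osc {n : ℕ} {a : ℝ} {u : En n × ℝ → ℝ} {f' : En n → (En n →L[ℝ] ℝ)} {M0 M1 M2 : ℝ}
    (H : Dat a u f' M0 M1 M2) {X : En n × ℝ} {ρ M θ : ℝ} (hθ : 0 < θ)
    (hρ : 0 < ρ) (hX : ‖X‖ + 2 * ρ ≤ 7/10) (hM : 0 < M)
    (hX2 : 0 < X.2) (hb : ∀ p, ‖p - X‖ ≤ 2 * ρ → 0 ≤ p.2 → |u p| ≤ M)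
    (p : En n × ℝ) (hp1 : ‖p - X‖ ≤ ρ) (hp2 : X.2 ≤ p.2) :
    |u p - u X| ≤ (M + ρ * M1) * (θ + (2 + (n * (n + 3)) ^ 2 / (4 * θ)) * (‖p.1 - X.1‖ / ρ) ^ 2 +
      (2 + (n + 1) * (2 + (n * (n + 3)) ^ 2 / (4 * θ))) * ((p.2 - X.2) / ρ) ^ (1 - a)) := by
  have hn : ∀ p : En n × ℝ, ‖p‖ ≤ ‖p - X‖ + ‖X‖ := fun p => by
    simpa using norm_add_le (p - X) X
  have hρM : 0 ≤ ρ * M1 := mul_nonneg hρ.le H.p1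
  refine y_modulus (C1 := n * (n + 3)) H.ha0 H.ha1 hX2 hρ (by linarith) hθ
    (H.hc.mono fun p hp => ⟨by linarith [hn p, hp.1], hX2.le.trans hp.2⟩)
    (H.hu.mono fun p hp => ⟨by linarith [hn p, hp.1], hX2.trans hp.2⟩)
    (fun p h1 h2 => (hb p (by linarith) (hX2.le.trans h2)).trans (by linarith)) ?_ p hp1 hp2
  intro q hq1 hq2
  have hg : ∀ x ∈ Metric.closedBall X.1 ρ, ‖((x, X.2) : En n × ℝ) - X‖ ≤ ρ := by
    intro x hx
    rw [Metric.mem_closedBall, dist_eq_norm] at hx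
    rw [Prod.norm_def]
    simp only [Prod.fst_sub, Prod.snd_sub, sub_self, norm_zero]
    exact max_le hx hρ.le
  have := (convex_closedBall X.1 ρ).norm_image_sub_le_of_norm_hasFDerivWithin_le
    (f := fun z => u (z, X.2))
    (f' := fun x => (fderiv ℝ u (x, X.2)).comp (ContinuousLinearMap.inl ℝ (En n) ℝ))
    (C := n * (n + 3) * (M + ρ * M1) / ρ) (x := X.1) (y := q.1)
    (fun x hx => ?_) (fun x hx => ?_) (by simpa using hρ.le)
    (by rw [Metric.mem_closedBall, dist_eq_norm]; exact (norm_fst_le (q - X)).trans hq1)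
  · have eq : q = (q.1, X.2) := by rw [← hq2]
    rw [eq]
    exact this
  · refine (hasFDerivAt_slice ?_).hasFDerivWithinAt
    exact (H.hu (x, X.2) ⟨by linarith [hn (x, X.2), hg x hx], hX2⟩).1.differentiableAt (by norm_num)
  · have h1 : ∀ i, |((fderiv ℝ u (x, X.2)).comp (ContinuousLinearMap.inl ℝ (En n) ℝ))
        (EuclideanSpace.single i 1)| ≤ (n + 3) * M / ρ + M1 := by
      intro i
      refine H.grad (X := (x, X.2)) hρ (by linarith [hn (x, X.2), hg x hx]) hX2 ?_ i
      intro p hp hp2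
      refine hb p ?_ hp2
      have := norm_add_le (p - (x, X.2)) ((x, X.2) - X)
      rw [sub_add_sub_cancel] at this
      linarith [hg x hx]
    have hpos : 0 ≤ (n + 3) * M / ρ + M1 := by have := H.p1; positivity
    refine (clm_norm_le hpos h1).trans ?_
    have e : n * (n + 3) * (M + ρ * M1) / ρ = n * ((n + 3) * M / ρ + (n + 3) * M1) := by
      field_simp
    rw [e]
    have := H.p1
    gcongr
    nlinarith [(Nat.cast_nonneg n : (0:ℝ) ≤ n)]

theorem eps_exists {C2 C3 θ b : ℝ} (hC2 : 0 < C2) (hC3 : 0 < C3) (hθ : 0 < θ) (hb : 0 < b) :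
    ∃ ε : ℝ, 0 < ε ∧ ε ≤ 1 ∧ C2 * ε ^ 2 ≤ θ ∧ C3 * ε ^ b ≤ θ := by
  refine ⟨min 1 (min (θ / C2) ((θ / C3) ^ (1 / b))), by positivity, min_le_left _ _, ?_, ?_⟩
  · set ε := min 1 (min (θ / C2) ((θ / C3) ^ (1 / b))) with hε
    have h1 : ε ≤ 1 := min_le_left _ _
    have h0 : 0 < ε := by positivity
    have h2 : ε ≤ θ / C2 := (min_le_right _ _).trans (min_le_left _ _)
    rw [le_div_iff₀ hC2] at h2
    nlinarith [mul_pos hC2 h0]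
  · have h2 : min 1 (min (θ / C2) ((θ / C3) ^ (1 / b))) ≤ (θ / C3) ^ (1 / b) :=
      (min_le_right _ _).trans (min_le_right _ _)
    have h3 := Real.rpow_le_rpow (by positivity) h2 hb.le
    rw [← Real.rpow_mul (by positivity), one_div_mul_cancel hb.ne', Real.rpow_one, le_div_iff₀ hC3] at h3
    linarith

theorem isOpen_halfBall (n : ℕ) (r : ℝ) : IsOpen (halfBall n r) := by
  have h1 : IsOpen {p : En n × ℝ | ‖p.1‖ ^ 2 + p.2 ^ 2 < r ^ 2} :=
    isOpen_lt (by fun_prop) (by fun_prop)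
  have h2 : IsOpen {p : En n × ℝ | 0 < p.2} := isOpen_lt (by fun_prop) (by fun_prop)
  exact h1.inter h2

set_option maxHeartbeats 1000000 in
theorem sup_step {n : ℕ} {a : ℝ} {u : En n × ℝ → ℝ} {f' : En n → (En n →L[ℝ] ℝ)} {M0 M1 M2 J : ℝ}
    (H : Dat a u f' M0 M1 M2)
    (hI : IntegrableOn (fun p : En n × ℝ => p.2 ^ a * (u p)^2) (halfBall n 1) volume)
    (hJ : (∫ p in halfBall n 1, p.2 ^ a * (u p)^2) ≤ J^2)
    {θ ε : ℝ} (hθ : θ = 1 / (12 * 2 ^ (n + 2))) (hε0 : 0 < ε) (hε1 : ε ≤ 1)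
    (hε2 : (2 + (n * (n + 3)) ^ 2 / (4 * θ)) * ε ^ 2 ≤ θ)
    (hε3 : (2 + (n + 1) * (2 + (n * (n + 3)) ^ 2 / (4 * θ))) * ε ^ (1 - a) ≤ θ)
    {X : En n × ℝ} (hX2 : 0 < X.2) {d : ℝ} (hd : 0 < d) (hXd : ‖X‖ + d ≤ 7/10) (hu0 : 0 < |u X|)
    (hb : ∀ p, ‖p - X‖ ≤ d / 2 → 0 ≤ p.2 → |u p| ≤ 2 ^ (n + 2) * |u X|)
    (h4 : 4 * M1 < |u X|) :
    (1 / 4 * (ε / 8) * ((ε / 4) ^ n * (volume (Metric.ball (0 : En n) 1)).toReal * (ε / 8)))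
      * d ^ (n + 2) * |u X| ^ 2 ≤ J ^ 2 := by
  have hM1 := H.p1
  have hn : ∀ p : En n × ℝ, ‖p‖ ≤ ‖p - X‖ + ‖X‖ := fun p => by
    simpa using norm_add_le (p - X) X
  have hXn : 0 ≤ ‖X‖ := norm_nonneg X
  have hθ0 : 0 < θ := by rw [hθ]; positivity
  have hθ1 : θ ≤ 1 / 12 := by
    rw [hθ]
    apply one_div_le_one_div_of_le (by norm_num)
    have : (1:ℝ) ≤ 2 ^ (n + 2) := one_le_pow₀ (by norm_num)
    linarith
  set ρ := d / 4 with hρd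
  have hρ : 0 < ρ := by positivity
  set E : Set (En n × ℝ) := Metric.ball X.1 (ε * ρ) ×ˢ Ioo (X.2 + ε * ρ / 2) (X.2 + ε * ρ) with hE
  have hερ : 0 < ε * ρ := by positivity
  have hερ1 : ε * ρ ≤ ρ := by nlinarith
  have hEm : MeasurableSet E := measurableSet_ball.prod measurableSet_Ioo
  have hEp : ∀ p ∈ E, ‖p.1 - X.1‖ < ε * ρ ∧ ε * ρ / 2 < p.2 - X.2 ∧ p.2 - X.2 < ε * ρ := by
    intro p hp
    refine ⟨by simpa [dist_eq_norm] using hp.1, by linarith [hp.2.1], by linarith [hp.2.2]⟩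
  have hEn : ∀ p ∈ E, ‖p - X‖ ≤ ρ := by
    intro p hp
    obtain ⟨h1, h2, h3⟩ := hEp p hp
    rw [Prod.norm_def]
    refine max_le ?_ ?_
    · simp only [Prod.fst_sub]; linarith
    · simp only [Prod.snd_sub]; rw [Real.norm_of_nonneg (by linarith)]; linarith
  have hEs : E ⊆ halfBall n 1 := by
    intro p hp
    obtain ⟨h1, h2, h3⟩ := hEp p hp
    have hp7 : ‖p‖ ≤ 7/10 := by linarith [hn p, hEn p hp]
    have e1 := (norm_fst_le p).trans hp7
    have e2 := (norm_snd_le p).trans hp7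
    have h0 : 0 < p.2 := by linarith
    rw [Real.norm_of_nonneg h0.le] at e2
    refine ⟨?_, h0⟩
    nlinarith [norm_nonneg p.1]
  have hval : ∀ p ∈ E, 1 / 4 * (ε / 8 * d) * |u X| ^ 2 ≤ p.2 ^ a * (u p) ^ 2 := by
    intro p hp
    obtain ⟨h1, h2, h3⟩ := hEp p hp
    have h0 : 0 < p.2 := by linarith
    have hp7 : ‖p‖ ≤ 7/10 := by linarith [hn p, hEn p hp]
    have e2 := (norm_snd_le p).trans hp7
    rw [Real.norm_of_nonneg h0.le] at e2
    have ho := H.osc hθ0 hρ (by linarith) (M := 2 ^ (n + 2) * |u X|) (by positivity) hX2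
      (fun p h1 h2 => hb p (by linarith) h2) p (hEn p hp) (by linarith)
    have k1 : (2 + (n * (n + 3)) ^ 2 / (4 * θ)) * (‖p.1 - X.1‖ / ρ) ^ 2 ≤ θ := by
      refine le_trans ?_ hε2
      have : ‖p.1 - X.1‖ / ρ ≤ ε := by rw [div_le_iff₀ hρ]; exact h1.le
      gcongr
    have k2 : (2 + (n + 1) * (2 + (n * (n + 3)) ^ 2 / (4 * θ))) * ((p.2 - X.2) / ρ) ^ (1 - a) ≤ θ := by
      refine le_trans ?_ hε3
      have : (p.2 - X.2) / ρ ≤ ε := by rw [div_le_iff₀ hρ]; exact h3.le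
      have h0' : 0 ≤ (p.2 - X.2) / ρ := div_nonneg (by linarith) hρ.le
      have := Real.rpow_le_rpow h0' this (by linarith [H.ha1] : 0 ≤ 1 - a)
      gcongr
    have hpos : 0 ≤ 2 ^ (n + 2) * |u X| + ρ * M1 := by positivity
    have ho2 : |u p - u X| ≤ (2 ^ (n + 2) * |u X| + ρ * M1) * (3 * θ) := by
      refine ho.trans (mul_le_mul_of_nonneg_left (by linarith) hpos)
    have e3 : (2 ^ (n + 2) * |u X|) * (3 * θ) = |u X| / 4 := by
      rw [hθ]; field_simp; norm_num
    have e4 : ρ * M1 * (3 * θ) ≤ M1 := by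
      have : ρ * (3 * θ) ≤ 1 := by
        have : ρ ≤ 1 := by linarith
        nlinarith
      nlinarith
    have ho3 : |u p - u X| ≤ |u X| / 2 := by
      rw [add_mul, e3] at ho2; linarith
    have habs : |u X| / 2 ≤ |u p| := by
      have := abs_sub_abs_le_abs_sub (u X) (u p)
      rw [abs_sub_comm] at this
      linarith
    have hya : ε / 8 * d ≤ p.2 ^ a := by
      have : p.2 ^ (1:ℝ) ≤ p.2 ^ a := Real.rpow_le_rpow_of_exponent_ge h0 (by linarith) H.ha1.le
      rw [Real.rpow_one] at this
      have e : ε / 8 * d = ε * ρ / 2 := by rw [hρd]; ring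
      rw [e]; linarith
    have hsq : 1 / 4 * |u X| ^ 2 ≤ (u p) ^ 2 := by
      rw [← sq_abs (u p)]
      nlinarith
    calc 1 / 4 * (ε / 8 * d) * |u X| ^ 2 = (ε / 8 * d) * (1 / 4 * |u X| ^ 2) := by ring
      _ ≤ _ := by gcongr
  have hvol : (volume E).toReal = (ε * ρ) ^ n * (volume (Metric.ball (0 : En n) 1)).toReal * (ε * ρ / 2) := by
    rw [hE, Measure.volume_eq_prod, Measure.prod_prod, Measure.addHaar_ball_of_pos _ _ hερ, Real.volume_Ioo]
    simp only [ENNReal.toReal_mul]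
    rw [ENNReal.toReal_ofReal (by positivity), ENNReal.toReal_ofReal (by linarith)]
    simp
    left; ring
  have hfin : volume E ≠ ⊤ := by
    rw [hE, Measure.volume_eq_prod, Measure.prod_prod]
    exact ENNReal.mul_ne_top measure_ball_lt_top.ne measure_Ioo_lt_top.ne
  have i1 := setIntegral_ge_of_const_le_real hEm hfin hval (hI.mono_set hEs)
  have hmB : MeasurableSet (halfBall n 1) := (isOpen_halfBall n 1).measurableSet
  have i2 : (∫ p in E, p.2 ^ a * (u p)^2) ≤ ∫ p in halfBall n 1, p.2 ^ a * (u p)^2 := by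
    refine setIntegral_mono_set hI ?_ (Filter.Eventually.of_forall hEs)
    refine (ae_restrict_iff' hmB).2 (Filter.Eventually.of_forall fun p hp => ?_)
    have : 0 < p.2 := hp.2
    simp only [Pi.zero_apply]
    positivity
  rw [Measure.real, hvol] at i1
  calc _ = 1 / 4 * (ε / 8 * d) * |u X| ^ 2 * ((ε * ρ) ^ n * (volume (Metric.ball (0 : En n) 1)).toReal * (ε * ρ / 2)) := by
        rw [hρd]
        have : (ε * (d / 4)) ^ n = (ε / 4) ^ n * d ^ n := by rw [← mul_pow]; ring
        rw [this]; ring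
    _ ≤ _ := i1.trans (i2.trans hJ)

theorem sup_bound (n : ℕ) (a : ℝ) (ha0 : 0 < a) (ha1 : a < 1) :
    ∃ C > 0, ∀ (u : En n × ℝ → ℝ) (f' : En n → (En n →L[ℝ] ℝ)) (M0 M1 M2 J : ℝ),
      Dat a u f' M0 M1 M2 →
      IntegrableOn (fun p : En n × ℝ => p.2 ^ a * (u p)^2) (halfBall n 1) volume →
      0 ≤ J → (∫ p in halfBall n 1, p.2 ^ a * (u p)^2) ≤ J^2 →
      ∀ p, ‖p‖ ≤ 13/20 → 0 ≤ p.2 → |u p| ≤ C * (M0 + M1 + J) := by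
  set θ : ℝ := 1 / (12 * 2 ^ (n + 2)) with hθ
  have hθ0 : 0 < θ := by positivity
  obtain ⟨ε, hε0, hε1, hε2, hε3⟩ := eps_exists (C2 := 2 + (n * (n + 3)) ^ 2 / (4 * θ))
    (C3 := 2 + (n + 1) * (2 + (n * (n + 3)) ^ 2 / (4 * θ))) (θ := θ) (b := 1 - a)
    (by positivity) (by positivity) hθ0 (by linarith)
  set c : ℝ := 1 / 4 * (ε / 8) * ((ε / 4) ^ n * (volume (Metric.ball (0 : En n) 1)).toReal * (ε / 8)) with hc
  have hV : 0 < (volume (Metric.ball (0 : En n) 1)).toReal :=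
    ENNReal.toReal_pos (Metric.measure_ball_pos _ _ one_pos).ne' measure_ball_lt_top.ne
  have hc0 : 0 < c := by positivity
  refine ⟨20 ^ (n + 2) * (4 + 1 / √c), by positivity, ?_⟩
  intro u f' M0 M1 M2 J H hI hJ0 hJ p hp hp2
  have q0 := H.p0
  have q1 := H.p1
  set Q : Set (En n × ℝ) := {p | ‖p‖ ≤ 7/10 ∧ 0 ≤ p.2} with hQ
  have hQc : IsCompact Q := by
    have : Q = Metric.closedBall 0 (7/10) ∩ {p | 0 ≤ p.2} := by ext p; simp [hQ]
    rw [this]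
    exact (isCompact_closedBall _ _).inter_right (isClosed_le (by fun_prop) (by fun_prop))
  obtain ⟨X, hXQ, hX⟩ := hQc.exists_isMaxOn (f := fun p => (7/10 - ‖p‖) ^ (n + 2) * |u p|)
    ⟨0, by simp [hQ]; norm_num⟩ (ContinuousOn.mul (by fun_prop) H.hc.abs)
  have hmax : ∀ p, ‖p‖ ≤ 7/10 → 0 ≤ p.2 →
      (7/10 - ‖p‖) ^ (n + 2) * |u p| ≤ (7/10 - ‖X‖) ^ (n + 2) * |u X| := fun p h1 h2 => hX (⟨h1, h2⟩ : p ∈ Q)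
  have key : (7/10 - ‖X‖) ^ (n + 2) * |u X| ≤ (4 + 1 / √c) * (M0 + M1 + J) := by
    set d := 7/10 - ‖X‖ with hd
    have hd0 : 0 ≤ d := by linarith [hXQ.1]
    have hd1 : d ≤ 1 := by linarith [norm_nonneg X]
    have hpw : d ^ (n + 2) ≤ 1 := pow_le_one₀ hd0 hd1
    have hR : 0 ≤ (4 + 1 / √c) * (M0 + M1 + J) := by positivity
    have hs4 : 4 * (M0 + M1 + J) ≤ (4 + 1 / √c) * (M0 + M1 + J) := by
      gcongr; simp
    by_cases hu0 : |u X| ≤ 4 * M1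
    · have : d ^ (n + 2) * |u X| ≤ 1 * |u X| := by gcongr
      linarith
    push Not at hu0
    have hu1 : 0 < |u X| := by linarith
    rcases hd0.eq_or_lt with h | hdp
    · rw [← h]; simpa using hR
    rcases (show 0 ≤ X.2 from hXQ.2).eq_or_lt with h | hX2
    · have := H.h0 X.1 (by linarith [norm_fst_le X, hXQ.1])
      have e : (X.1, (0:ℝ)) = X := by rw [h]
      rw [e] at this
      have : d ^ (n + 2) * |u X| ≤ 1 * |u X| := by gcongr
      linarith
    have hst := sup_step H hI hJ hθ hε0 hε1 hε2 hε3 hX2 hdp (by linarith) hu1 (fun p h1 h2 => ?_) hu0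
    · have h1 : c * (d ^ (n + 2) * |u X|) ^ 2 ≤ J ^ 2 := by
        refine le_trans ?_ hst
        rw [mul_pow, ← mul_assoc]
        have : (d ^ (n + 2)) ^ 2 ≤ d ^ (n + 2) := by
          have : 0 ≤ d ^ (n + 2) := by positivity
          nlinarith
        gcongr
      have h2 : √c * (d ^ (n + 2) * |u X|) ≤ J := by
        refine abs_le_of_sq_le_sq' ?_ hJ0 |>.2
        rw [mul_pow, Real.sq_sqrt hc0.le]; exact h1
      have h3 : d ^ (n + 2) * |u X| ≤ 1 / √c * J := by
        rw [one_div, inv_mul_eq_div, le_div_iff₀ (by positivity)]; linarith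
      refine h3.trans ?_
      have : 0 ≤ 1 / √c := by positivity
      gcongr
      · linarith
      · linarith
    · have hpn : ‖p‖ ≤ ‖p - X‖ + ‖X‖ := by simpa using norm_add_le (p - X) X
      have h3 := hmax p (by linarith) h2
      have h4 : (d / 2) ^ (n + 2) * |u p| ≤ d ^ (n + 2) * |u X| := by
        refine le_trans ?_ h3
        gcongr
        linarith
      rw [div_pow, div_mul_eq_mul_div, div_le_iff₀ (by positivity), mul_assoc] at h4
      have := le_of_mul_le_mul_left h4 (by positivity)
      linarith
  have h1 := (hmax p (by linarith) hp2).trans key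
  have h2 : (1/20 : ℝ) ^ (n + 2) * |u p| ≤ (4 + 1 / √c) * (M0 + M1 + J) := by
    refine le_trans ?_ h1
    gcongr
    linarith
  rw [div_pow, one_pow, one_div, inv_mul_eq_div, div_le_iff₀ (by positivity)] at h2
  linarith

theorem norm_eX {n : ℕ} (i : Fin n) : ‖(eX i : En n × ℝ)‖ = 1 := by
  simp [eX, Prod.norm_def]

theorem norm_smul_eX {n : ℕ} (i : Fin n) {k : ℝ} (hk : 0 ≤ k) : ‖k • (eX i : En n × ℝ)‖ = k := by
  rw [norm_smul, norm_eX, Real.norm_of_nonneg hk, mul_one]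

theorem Dat.trace2 {n : ℕ} {a : ℝ} {u : En n × ℝ → ℝ} {f' : En n → (En n →L[ℝ] ℝ)} {M0 M1 M2 : ℝ}
    (H : Dat a u f' M0 M1 M2) (i : Fin n) {k : ℝ} (hk : 0 ≤ k) (hk1 : k ≤ 1/100)
    {p q : En n × ℝ} (hp : ‖p‖ < 7/10) (hq : ‖q‖ < 7/10) (hp2 : p.2 = 0)
    (hq2 : q.2 = 0) : |(u (p + k • eX i) - u (p - k • eX i)) - (u (q + k • eX i) - u (q - k • eX i))|
      ≤ 2 * M2 * k * ‖p.1 - q.1‖ := by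
  set e : En n := k • EuclideanSpace.single i (1:ℝ) with he
  have hen : ‖e‖ = k := by rw [he, norm_smul, Real.norm_of_nonneg hk]; simp
  have h1 : ∀ x : En n, ‖x‖ < 7/10 → ‖x + e‖ < 1 ∧ ‖x - e‖ < 1 := fun x hx =>
    ⟨by linarith [norm_add_le x e], by linarith [norm_sub_le x e]⟩
  have := (convex_ball (0 : En n) (7/10)).norm_image_sub_le_of_norm_hasFDerivWithin_le
    (f := fun z => u (z + e, 0) - u (z - e, 0)) (f' := fun z => f' (z + e) - f' (z - e))
    (C := 2 * M2 * k) (x := q.1) (y := p.1)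
    (fun x hx => ?_) (fun x hx => ?_)
    (by simpa using (norm_fst_le q).trans_lt hq) (by simpa using (norm_fst_le p).trans_lt hp)
  · have ep : ∀ p : En n × ℝ, p.2 = 0 → p + k • eX i = (p.1 + e, 0) ∧ p - k • eX i = (p.1 - e, 0) := by
      intro p hp
      constructor <;> ext <;> simp [he, eX, hp]
    rw [(ep p hp2).1, (ep p hp2).2, (ep q hq2).1, (ep q hq2).2]
    exact this
  · obtain ⟨k1, k2⟩ := h1 x (by simpa using hx)
    have g1 : HasFDerivAt (fun z => u (z + e, 0)) (f' (x + e)) x :=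
      (hasFDerivAt_comp_add_right (f := fun z => u (z, 0)) e).2 (H.hf _ k1)
    have g2 : HasFDerivAt (fun z => u (z - e, 0)) (f' (x - e)) x :=
      (hasFDerivAt_comp_sub (f := fun z => u (z, 0)) e).2 (H.hf _ k2)
    exact (g1.sub g2).hasFDerivWithinAt
  · obtain ⟨k1, k2⟩ := h1 x (by simpa using hx)
    refine (H.h2 _ k1 _ k2).trans ?_
    have : ‖x + e - (x - e)‖ = 2 * k := by
      rw [show x + e - (x - e) = (2:ℝ) • e by module, norm_smul, hen]; simp
    rw [this]; linarith

theorem Dat.lip2 {n : ℕ} {a : ℝ} {u : En n × ℝ → ℝ} {f' : En n → (En n →L[ℝ] ℝ)} {M0 M1 M2 M : ℝ}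
    (H : Dat a u f' M0 M1 M2) (hM : ∀ p, ‖p‖ ≤ 13/20 → 0 ≤ p.2 → |u p| ≤ M)
    {X : En n × ℝ} (hX : ‖X‖ ≤ 6/10) (hX2 : 0 ≤ X.2) (i j : Fin n) {k h : ℝ} (hk : 0 ≤ k)
    (hk1 : k ≤ 1/100) (hh : 0 ≤ h) (hh1 : h ≤ 1/100) :
    |(u (X + h • eX j + k • eX i) - u (X + h • eX j - k • eX i)) -
      (u (X - h • eX j + k • eX i) - u (X - h • eX j - k • eX i))| ≤
      ((200 * (n + 3) * (200 * (n + 3) * M + 2 * M1) + 4 * M2) * k) * h := by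
  have hn : ∀ p : En n × ℝ, ‖p‖ ≤ ‖p - X‖ + ‖X‖ := fun p => by
    simpa using norm_add_le (p - X) X
  have hp2 : ∀ p : En n × ℝ, (p + k • eX i).2 = p.2 ∧ (p - k • eX i).2 = p.2 := by
    intro p; simp [eX]
  have hpk : ∀ p : En n × ℝ, ‖p + k • eX i‖ ≤ ‖p‖ + k ∧ ‖p - k • eX i‖ ≤ ‖p‖ + k := fun p =>
    ⟨by simpa only [norm_smul_eX i hk] using norm_add_le p (k • eX i),
      by simpa only [norm_smul_eX i hk] using norm_sub_le p (k • eX i)⟩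
  have hp2' : ∀ p : En n × ℝ, (p + (-k) • eX i).2 = p.2 := by
    intro p; simp [eX]
  have hpk' : ∀ p : En n × ℝ, ‖p + (-k) • eX i‖ ≤ ‖p‖ + k := fun p => by
    rw [neg_smul, ← sub_eq_add_neg]; exact (hpk p).2
  have hv := lip_est (u := fun p => u (p + k • eX i) - u (p - k • eX i)) (X := X) (ρ := 1/100)
    (M := (200 * (n + 3) * M + 2 * M1) * k) (Λ := 4 * M2 * k) (h := h) H.ha0.le H.ha1.le hX2 (by norm_num)
    (by have := H.p2; positivity) j ?_ ?_ ?_ ?_ hh hh1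
  · refine hv.trans (le_of_eq ?_)
    ring
  · refine ContinuousOn.sub ?_ ?_
    · refine H.hc.comp (by fun_prop) fun p hp => ?_
      exact ⟨by linarith [(hpk p).1, hn p, hp.1], by rw [(hp2 p).1]; exact hp.2⟩
    · refine H.hc.comp (by fun_prop) fun p hp => ?_
      exact ⟨by linarith [(hpk p).2, hn p, hp.1], by rw [(hp2 p).2]; exact hp.2⟩
  · have s1 := H.hu.shift (Ω' := {p | ‖p - X‖ < 1/100 ∧ 0 < p.2}) i k (fun p hp =>
      ⟨by linarith [(hpk p).1, hn p, hp.1], by rw [(hp2 p).1]; exact hp.2⟩)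
    have s2 := H.hu.shift (Ω' := {p | ‖p - X‖ < 1/100 ∧ 0 < p.2}) i (-k) (fun p hp =>
      ⟨by linarith [hpk' p, hn p, hp.1], by rw [hp2' p]; exact hp.2⟩)
    have := s1.sub s2
    simpa only [neg_smul, ← sub_eq_add_neg] using this
  · intro p hp hp0
    have := H.lip (X := p) (ρ := 1/100) (M := M) (by norm_num) (by linarith [hn p]) hp0
      (fun q hq hq2 => hM q ?_ hq2) i hk hk1
    · refine this.trans (le_of_eq ?_)
      ring
    · have : ‖q‖ ≤ ‖q - p‖ + ‖p‖ := by simpa using norm_add_le (q - p) p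
      linarith [hn p]
  · intro p hp hp0 hpj
    have h1 := H.trace2 i hk hk1 (p := p) (q := Rf j (X.1 j) p) (by linarith [hn p])
      (by have := hn (Rf j (X.1 j) p); rw [norm_Rf] at this; linarith) hp0 (by rw [Rf_snd, hp0])
    have h2 : ‖p.1 - (Rf j (X.1 j) p).1‖ = 2 * (p.1 j - X.1 j) := by
      have : p.1 - (Rf j (X.1 j) p).1 = (2 * (p.1 j - X.1 j)) • EuclideanSpace.single j (1:ℝ) := by
        simp [Rf, eX]
      rw [this, norm_smul, Real.norm_of_nonneg (by linarith)]
      simp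
    rw [h2] at h1
    refine h1.trans (le_of_eq ?_)
    ring

theorem Dat.hess {n : ℕ} {a : ℝ} {u : En n × ℝ → ℝ} {f' : En n → (En n →L[ℝ] ℝ)} {M0 M1 M2 M D : ℝ}
    (H : Dat a u f' M0 M1 M2) (hM : ∀ p, ‖p‖ ≤ 13/20 → 0 ≤ p.2 → |u p| ≤ M)
    (hD : D = 200 * (n + 3) * (200 * (n + 3) * M + 2 * M1) + 4 * M2)
    {X : En n × ℝ} (hX : ‖X‖ ≤ 6/10) (hX2 : 0 < X.2) (i j : Fin n) :
    |fderiv ℝ (fun q => fderiv ℝ u q (eX i)) X (eX j)| ≤ D := by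
  have h1 := fderiv_bound_of_symm (φ := fun q => fderiv ℝ u q (eX i)) (X := X) (v := eX j) (C := D / 2)
    (h0 := 1/100) (fderiv_apply_differentiableAt (H.hu X ⟨by linarith, hX2⟩).1 _) (by norm_num) ?_
  · have : 0 ≤ D := by linarith [abs_nonneg (fderiv ℝ (fun q => fderiv ℝ u q (eX i)) X (eX j))]
    linarith
  intro h hh hh1
  have hpk : ‖X + h • eX j‖ ≤ ‖X‖ + h ∧ ‖X - h • eX j‖ ≤ ‖X‖ + h :=
    ⟨by simpa only [norm_smul_eX j hh] using norm_add_le X (h • eX j),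
      by simpa only [norm_smul_eX j hh] using norm_sub_le X (h • eX j)⟩
  have hp2 : (X + h • eX j).2 = X.2 ∧ (X - h • eX j).2 = X.2 := by simp [eX]
  have d1 : DifferentiableAt ℝ u (X + h • eX j) :=
    (H.hu _ ⟨by linarith, by rw [hp2.1]; exact hX2⟩).1.differentiableAt (by norm_num)
  have d2 : DifferentiableAt ℝ u (X - h • eX j) :=
    (H.hu _ ⟨by linarith, by rw [hp2.2]; exact hX2⟩).1.differentiableAt (by norm_num)
  have e1 : HasFDerivAt (fun q => u (q + h • eX j)) (fderiv ℝ u (X + h • eX j)) X :=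
    (hasFDerivAt_comp_add_right (f := u) (h • eX j)).2 d1.hasFDerivAt
  have e2 : HasFDerivAt (fun q => u (q - h • eX j)) (fderiv ℝ u (X - h • eX j)) X :=
    (hasFDerivAt_comp_sub (f := u) (h • eX j)).2 d2.hasFDerivAt
  have e3 : HasFDerivAt (fun q => u (q + h • eX j) - u (q - h • eX j))
    (fderiv ℝ u (X + h • eX j) - fderiv ℝ u (X - h • eX j)) X := e1.sub e2
  have := fderiv_bound_of_symm (X := X) (v := eX i) (C := D * h) (h0 := 1/100)
    e3.differentiableAt (by norm_num) ?_
  · rw [e3.fderiv, sub_apply] at this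
    linarith
  · intro k hk hk1
    have := H.lip2 hM hX hX2.le i j hk hk1 hh hh1
    rw [← hD] at this
    have r1 : X + k • eX i + h • eX j = X + h • eX j + k • eX i := by abel
    have r2 : X + k • eX i - h • eX j = X - h • eX j + k • eX i := by abel
    have r3 : X - k • eX i + h • eX j = X + h • eX j - k • eX i := by abel
    have r4 : X - k • eX i - h • eX j = X - h • eX j - k • eX i := by abel
    rw [r1, r2, r3, r4]
    have e : ∀ A B C D : ℝ, A - B - (C - D) = A - C - (B - D) := by intros; ring
    rw [e]
    linarith

theorem Dat.slice_lip {n : ℕ} {a : ℝ} {u : En n × ℝ → ℝ} {f' : En n → (En n →L[ℝ] ℝ)} {M0 M1 M2 M D : ℝ}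
    (H : Dat a u f' M0 M1 M2) (hM : ∀ p, ‖p‖ ≤ 13/20 → 0 ≤ p.2 → |u p| ≤ M)
    (hD : D = 200 * (n + 3) * (200 * (n + 3) * M + 2 * M1) + 4 * M2) (hD0 : 0 ≤ D)
    {y : ℝ} (hy : 0 < y) (hy1 : y ≤ 6/10) {x x' : En n} (hx : ‖x‖ < 6/10) (hx' : ‖x'‖ < 6/10) :
    ‖(fderiv ℝ u (x, y)).comp (ContinuousLinearMap.inl ℝ (En n) ℝ) -
      (fderiv ℝ u (x', y)).comp (ContinuousLinearMap.inl ℝ (En n) ℝ)‖ ≤ n * (n * D * ‖x - x'‖) := by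
  refine clm_norm_le (by positivity) fun i => ?_
  have hz : ∀ z ∈ Metric.ball (0 : En n) (6/10), ‖((z, y) : En n × ℝ)‖ ≤ 6/10 := by
    intro z hz
    rw [Prod.norm_def]
    have h : ‖z‖ < 6/10 := by simpa using hz
    refine max_le h.le ?_
    simp only; rw [Real.norm_of_nonneg hy.le]; exact hy1
  have := (convex_ball (0 : En n) (6/10)).norm_image_sub_le_of_norm_hasFDerivWithin_le
    (f := fun z => fderiv ℝ u (z, y) (eX i))
    (f' := fun z => (fderiv ℝ (fun q => fderiv ℝ u q (eX i)) (z, y)).comp (ContinuousLinearMap.inl ℝ (En n) ℝ))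
    (C := n * D) (x := x') (y := x)
    (fun z hz' => ?_) (fun z hz' => ?_)
    (by simpa using hx') (by simpa using hx)
  · exact this
  · exact (hasFDerivAt_slice (fderiv_apply_differentiableAt
      (H.hu (z, y) ⟨by linarith [hz z hz'], hy⟩).1 _)).hasFDerivWithinAt
  · exact clm_norm_le hD0 fun j => H.hess hM hD (hz z hz') hy i j

theorem ode_expand {a b Q : ℝ} (ha0 : 0 < a) (ha1 : a < 1) (hb : 0 < b) (hQ : 0 ≤ Q) {v v1 v2 : ℝ → ℝ}
    (hc : ContinuousOn v (Ico 0 b)) (hv : ∀ y, 0 < y → y < b → HasDerivAt v (v1 y) y)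
    (hv1 : ∀ y, 0 < y → y < b → HasDerivAt v1 (v2 y) y)
    (hq : ∀ y, 0 < y → y < b → |v2 y + a / y * v1 y| ≤ Q) :
    ∃ G, ∀ y, 0 < y → y < b → |v y - v 0 - y ^ (1 - a) * G| ≤ Q * y ^ 2 := by
  have hF : ∀ y, 0 < y → y < b → HasDerivAt (fun y => y ^ a * v1 y) (y ^ a * (v2 y + a / y * v1 y)) y := by
    intro y h0 h1
    have e1 : HasDerivAt (fun y : ℝ => y ^ a) (a * y ^ (a - 1)) y :=
      Real.hasDerivAt_rpow_const (Or.inl h0.ne')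
    refine HasDerivAt.congr_deriv (f := fun y => y ^ a * v1 y) (e1.mul (hv1 y h0 h1)) ?_
    rw [Real.rpow_sub_one h0.ne']
    field_simp
    ring
  have hP : ∀ y : ℝ, 0 < y → HasDerivAt (fun y => Q * y ^ (1 + a)) (Q * ((1 + a) * y ^ a)) y := by
    intro y h0
    have e1 : HasDerivAt (fun y : ℝ => y ^ (1 + a)) ((1 + a) * y ^ (1 + a - 1)) y :=
      Real.hasDerivAt_rpow_const (Or.inl h0.ne')
    rw [show 1 + a - 1 = a by ring] at e1
    exact e1.const_mul Q
  set F : ℝ → ℝ := fun y => y ^ a * v1 y with hFd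
  set P : ℝ → ℝ := fun y => Q * y ^ (1 + a) with hPd
  have hPQ : ∀ y : ℝ, 0 < y → 0 ≤ P y := fun y h => by simp only [hPd]; positivity
  have hbd : ∀ y, 0 < y → y < b → |y ^ a * (v2 y + a / y * v1 y)| ≤ Q * ((1 + a) * y ^ a) := by
    intro y h0 h1
    have hp : 0 < y ^ a := by positivity
    rw [abs_mul, abs_of_pos hp]
    have := hq y h0 h1
    nlinarith [mul_le_mul_of_nonneg_left this hp.le, mul_nonneg hQ (mul_pos ha0 hp).le]
  have inc : ∀ w y, 0 < w → w ≤ y → y < b → F w + P w ≤ F y + P y ∧ F y - P y ≤ F w - P w := by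
    intro w y h0 h1 h2
    rcases h1.eq_or_lt with rfl | h1
    · simp
    have d1 : ∀ z, 0 < z → z < b → HasDerivAt (fun z => F z + P z)
      (z ^ a * (v2 z + a / z * v1 z) + Q * ((1 + a) * z ^ a)) z := fun z k0 k1 => (hF z k0 k1).add (hP z k0)
    have d2 : ∀ z, 0 < z → z < b → HasDerivAt (fun z => F z - P z)
      (z ^ a * (v2 z + a / z * v1 z) - Q * ((1 + a) * z ^ a)) z := fun z k0 k1 => (hF z k0 k1).sub (hP z k0)
    constructor
    · obtain ⟨c, hc, hs⟩ := exists_hasDerivAt_eq_slope _ _ h1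
        (fun z hz => (d1 z (by linarith [hz.1]) (by linarith [hz.2])).continuousAt.continuousWithinAt)
        (fun z hz => d1 z (by linarith [hz.1]) (by linarith [hz.2]))
      rw [eq_div_iff (by linarith)] at hs
      have := neg_le_of_abs_le (hbd c (by linarith [hc.1]) (by linarith [hc.2]))
      have : 0 ≤ (c ^ a * (v2 c + a / c * v1 c) + Q * ((1 + a) * c ^ a)) * (y - w) :=
        mul_nonneg (by linarith) (by linarith)
      linarith
    · obtain ⟨c, hc, hs⟩ := exists_hasDerivAt_eq_slope _ _ h1
        (fun z hz => (d2 z (by linarith [hz.1]) (by linarith [hz.2])).continuousAt.continuousWithinAt)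
        (fun z hz => d2 z (by linarith [hz.1]) (by linarith [hz.2]))
      rw [eq_div_iff (by linarith)] at hs
      have := le_of_abs_le (hbd c (by linarith [hc.1]) (by linarith [hc.2]))
      have : 0 ≤ (Q * ((1 + a) * c ^ a) - c ^ a * (v2 c + a / c * v1 c)) * (y - w) :=
        mul_nonneg (by linarith) (by linarith)
      linarith
  have sep : ∀ z y, 0 < z → z < b → 0 < y → y < b → F z - P z ≤ F y + P y := by
    intro z y h1 h2 h3 h4
    rcases le_total z y with h | h
    · linarith [(inc z y h1 h h4).1, hPQ z h1]
    · linarith [(inc y z h3 h h2).2, hPQ y h3]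
  set S : Set ℝ := (fun y => F y + P y) '' Ioo 0 b with hS
  have hbdd : BddBelow S := ⟨F (b/2) - P (b/2), by
    rintro _ ⟨y, hy, rfl⟩
    exact sep _ _ (by linarith) (by linarith) hy.1 hy.2⟩
  have hne : S.Nonempty := ⟨_, ⟨b/2, ⟨by linarith, by linarith⟩, rfl⟩⟩
  set G := sInf S with hG
  have hG1 : ∀ y, 0 < y → y < b → |F y - G| ≤ P y := by
    intro y h0 h1
    have k1 : G ≤ F y + P y := csInf_le hbdd ⟨y, ⟨h0, h1⟩, rfl⟩
    have k2 : F y - P y ≤ G := le_csInf hne (by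
      rintro _ ⟨z, hz, rfl⟩
      exact sep _ _ h0 h1 hz.1 hz.2)
    rw [abs_le]; constructor <;> linarith
  refine ⟨G / (1 - a), fun y h0 h1 => ?_⟩
  have ha : 0 < 1 - a := by linarith
  have dH : ∀ z, 0 < z → z < b → HasDerivAt (fun z => v z - z ^ (1 - a) * (G / (1 - a)))
      (z ^ (-a) * (F z - G)) z := by
    intro z k0 k1
    have e1 : HasDerivAt (fun y : ℝ => y ^ (1 - a)) ((1 - a) * z ^ (1 - a - 1)) z :=
      Real.hasDerivAt_rpow_const (Or.inl k0.ne')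
    refine HasDerivAt.congr_deriv (f := fun z => v z - z ^ (1 - a) * (G / (1 - a)))
      ((hv z k0 k1).sub (e1.mul_const _)) ?_
    have e2 : z ^ (-a) * F z = v1 z := by
      simp only [hFd]; rw [← mul_assoc, ← Real.rpow_add k0]; simp
    rw [mul_sub, e2, show 1 - a - 1 = -a by ring]
    field_simp
  obtain ⟨c, hc', hs⟩ := exists_hasDerivAt_eq_slope (fun z => v z - z ^ (1 - a) * (G / (1 - a))) _ h0
    (by
      refine ContinuousOn.sub (hc.mono fun z hz => ⟨hz.1, by linarith [hz.2]⟩) ?_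
      exact ((Real.continuous_rpow_const ha.le).mul continuous_const).continuousOn)
    (fun z hz => dH z hz.1 (by linarith [hz.2]))
  rw [eq_div_iff (by linarith), Real.zero_rpow ha.ne'] at hs
  have e : v y - v 0 - y ^ (1 - a) * (G / (1 - a)) = c ^ (-a) * (F c - G) * (y - 0) := by
    rw [hs]; ring
  rw [e, abs_mul, abs_mul, sub_zero, abs_of_pos h0, abs_of_pos (Real.rpow_pos_of_pos hc'.1 _)]
  have k1 := hG1 c hc'.1 (by linarith [hc'.2])
  have k2 : c ^ (-a) * P c = Q * c := by
    simp only [hPd]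
    rw [mul_left_comm, ← Real.rpow_add hc'.1]; simp
  have k3 : c ^ (-a) * |F c - G| ≤ Q * c := by
    rw [← k2]
    have := Real.rpow_pos_of_pos hc'.1 (-a)
    gcongr
  have k4 : Q * c ≤ Q * y := by have := hc'.2; gcongr
  calc _ ≤ Q * y * y := mul_le_mul_of_nonneg_right (k3.trans k4) h0.le
    _ = _ := by ring

theorem Dat.expand {n : ℕ} {a : ℝ} {u : En n × ℝ → ℝ} {f' : En n → (En n →L[ℝ] ℝ)} {M0 M1 M2 M D : ℝ}
    (H : Dat a u f' M0 M1 M2) (hM : ∀ p, ‖p‖ ≤ 13/20 → 0 ≤ p.2 → |u p| ≤ M)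
    (hD : D = 200 * (n + 3) * (200 * (n + 3) * M + 2 * M1) + 4 * M2) (hD0 : 0 ≤ D)
    {x : En n} (hx : ‖x‖ < 6/10) :
    ∃ G, ∀ y, 0 < y → y < 6/10 → |u (x, y) - u (x, 0) - y ^ (1 - a) * G| ≤ n * D * y ^ 2 := by
  have hz : ∀ y : ℝ, 0 ≤ y → y < 6/10 → ‖((x, y) : En n × ℝ)‖ ≤ 6/10 := by
    intro y h0 h1
    rw [Prod.norm_def]
    refine max_le hx.le ?_
    simp only; rw [Real.norm_of_nonneg h0]; exact h1.le
  have hl : ∀ y : ℝ, HasDerivAt (fun t : ℝ => ((x, t) : En n × ℝ)) (0, 1) y := fun y =>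
    (hasDerivAt_const y x).prodMk (hasDerivAt_id y)
  refine ode_expand (v := fun y => u (x, y)) (v1 := fun y => fderiv ℝ u (x, y) (0, 1))
    (v2 := fun y => D2 u (x, y) (0, 1)) H.ha0 H.ha1 (by norm_num) (by positivity) ?_ ?_ ?_ ?_
  · refine H.hc.comp (by fun_prop) fun y hy => ?_
    exact ⟨by linarith [hz y hy.1 hy.2], hy.1⟩
  · intro y h0 h1
    have := ((H.hu (x, y) ⟨by linarith [hz y h0.le h1], h0⟩).1.differentiableAt (by norm_num)).hasFDerivAt
    exact this.comp_hasDerivAt y (hl y)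
  · intro y h0 h1
    have := (fderiv_apply_differentiableAt (H.hu (x, y) ⟨by linarith [hz y h0.le h1], h0⟩).1 (0, 1)).hasFDerivAt
    exact this.comp_hasDerivAt y (hl y)
  · intro y h0 h1
    have h2 := (H.hu (x, y) ⟨by linarith [hz y h0.le h1], h0⟩).2
    unfold Lop lap at h2
    simp only at h2
    have h3 : D2 u (x, y) (0, 1) + a / y * fderiv ℝ u (x, y) (0, 1) =
      - ∑ i : Fin n, D2 u (x, y) (EuclideanSpace.single i 1, 0) := by linarith
    rw [h3, abs_neg]
    calc |∑ i : Fin n, D2 u (x, y) (EuclideanSpace.single i 1, 0)|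
        ≤ ∑ i : Fin n, |D2 u (x, y) (EuclideanSpace.single i 1, 0)| := Finset.abs_sum_le_sum_abs _ _
      _ ≤ ∑ i : Fin n, D := Finset.sum_le_sum fun i _ => H.hess hM hD (hz y h0.le h1) h0 i i
      _ = n * D := by simp

theorem interp_bound {n : ℕ} {ψ : En n → ℝ} {ψ' : En n → (En n →L[ℝ] ℝ)} {e L h : ℝ} (hh : 0 < h)
    (hL : 0 ≤ L)
    (hh1 : h ≤ 1/20) (hd : ∀ x, ‖x‖ < 6/10 → HasFDerivAt ψ (ψ' x) x)
    (he : ∀ x, ‖x‖ < 6/10 → |ψ x| ≤ e)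
    (hl : ∀ x x', ‖x‖ < 6/10 → ‖x'‖ < 6/10 → ‖ψ' x - ψ' x'‖ ≤ L * ‖x - x'‖)
    {x : En n} (hx : ‖x‖ < 1/2) : ‖ψ' x‖ ≤ 2 * e / h + L * h := by
  have he0 : 0 ≤ e := (abs_nonneg _).trans (he x (by linarith))
  refine ContinuousLinearMap.opNorm_le_of_unit_norm (by positivity) fun v hv => ?_
  have hin : ∀ z ∈ Metric.closedBall x h, ‖z‖ < 6/10 := by
    intro z hz
    rw [Metric.mem_closedBall, dist_eq_norm] at hz
    have : ‖z‖ ≤ ‖z - x‖ + ‖x‖ := by simpa using norm_add_le (z - x) x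
    linarith
  have hmem : x + h • v ∈ Metric.closedBall x h := by
    simp [hv, norm_smul, abs_of_pos hh]
  have := (convex_closedBall x h).norm_image_sub_le_of_norm_hasFDerivWithin_le'
    (f := ψ) (f' := ψ') (φ := ψ' x) (C := L * h) (x := x) (y := x + h • v)
    (fun z hz => (hd z (hin z hz)).hasFDerivWithinAt) (fun z hz => ?_)
    (Metric.mem_closedBall_self hh.le) hmem
  · rw [add_sub_cancel_left, norm_smul, hv, mul_one, Real.norm_of_nonneg hh.le, map_smul, smul_eq_mul,
      Real.norm_eq_abs] at this
    have e1 := he x (by linarith)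
    have e2 := he _ (hin _ hmem)
    have e3 : |h * ψ' x v| ≤ 2 * e + L * h * h := by
      rw [abs_le] at *
      constructor <;> linarith [this.1, this.2, e1.1, e1.2, e2.1, e2.2]
    rw [abs_mul, abs_of_pos hh] at e3
    rw [Real.norm_eq_abs, show 2 * e / h + L * h = (2 * e + L * h * h) / h by field_simp, le_div_iff₀ hh]
    linarith
  · refine (hl z x (hin z hz) (by linarith)).trans ?_
    rw [Metric.mem_closedBall, dist_eq_norm] at hz
    gcongr

theorem holder_limit {n : ℕ} {a K : ℝ} (ha0 : 0 < a) (ha1 : a < 1) {g : En n → ℝ} {φ : ℝ → En n → ℝ}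
    {φ' : ℝ → En n → (En n →L[ℝ] ℝ)} (hK : 0 ≤ K)
    (hd : ∀ y x, 0 < y → y ≤ 1/2 → ‖x‖ < 6/10 → HasFDerivAt (φ y) (φ' y x) x)
    (hg : ∀ y x, 0 < y → y ≤ 1/2 → ‖x‖ < 6/10 → |g x - φ y x| ≤ K * y ^ (1 + a))
    (hl : ∀ y x x', 0 < y → y ≤ 1/2 → ‖x‖ < 6/10 → ‖x'‖ < 6/10 →
      ‖φ' y x - φ' y x'‖ ≤ K * y ^ (a - 1) * ‖x - x'‖) :
    ∃ (g' : En n → (En n →L[ℝ] ℝ)) (K' : ℝ), (∀ x, ‖x‖ < 1/2 → HasFDerivAt g (g' x) x) ∧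
      ∀ x x', ‖x‖ < 1/2 → ‖x'‖ < 1/2 → ‖g' x - g' x'‖ ≤ K' * ‖x - x'‖ ^ a := by
  have step : ∀ y x, 0 < y → y ≤ 1/2 → ‖x‖ < 1/2 → ‖φ' y x - φ' (y / 2) x‖ ≤ 100 * K * y ^ a := by
    intro y x h0 h1 hx
    have hya : 0 < y ^ a := by positivity
    have r1 : y ^ (1 + a) = y * y ^ a := by rw [Real.rpow_add h0, Real.rpow_one]
    have r2 : y ^ (a - 1) = y ^ a / y := Real.rpow_sub_one h0.ne' a
    have hya2 : (y / 2) ^ a ≤ y ^ a := Real.rpow_le_rpow (by linarith) (by linarith) ha0.le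
    have r3 : (y / 2) ^ (1 + a) ≤ y * y ^ a := by
      rw [← r1]; exact Real.rpow_le_rpow (by linarith) (by linarith) (by linarith)
    have r4 : (y / 2) ^ (a - 1) ≤ 2 * (y ^ a / y) := by
      rw [Real.rpow_sub_one (by linarith)]
      rw [show (y/2) ^ a / (y / 2) = 2 * ((y/2) ^ a / y) by field_simp]
      gcongr
    have := interp_bound (ψ := fun x => φ y x - φ (y / 2) x) (ψ' := fun x => φ' y x - φ' (y / 2) x)
      (e := 2 * K * (y * y ^ a)) (L := 3 * K * (y ^ a / y)) (h := y / 10) (by linarith) (by positivity)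
      (by linarith)
      (fun z hz => (hd y z h0 h1 hz).sub (hd (y/2) z (by linarith) (by linarith) hz)) ?_ ?_ hx
    · refine this.trans (le_of_le_of_eq ?_ rfl)
      have e : 2 * (2 * K * (y * y ^ a)) / (y / 10) + 3 * K * (y ^ a / y) * (y / 10) =
        (40 + 3/10) * (K * y ^ a) := by field_simp; ring
      rw [e]
      have : 0 ≤ K * y ^ a := by positivity
      linarith
    · intro z hz
      have k1 := hg y z h0 h1 hz
      have k2 := hg (y/2) z (by linarith) (by linarith) hz
      rw [r1] at k1
      have k3 := k2.trans (mul_le_mul_of_nonneg_left r3 hK)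
      rw [abs_le] at *
      constructor <;> linarith [k1.1, k1.2, k3.1, k3.2]
    · intro z z' hz hz'
      have k1 := hl y z z' h0 h1 hz hz'
      have k2 := hl (y/2) z z' (by linarith) (by linarith) hz hz'
      rw [r2] at k1
      have k3 : K * (y/2) ^ (a - 1) * ‖z - z'‖ ≤ K * (2 * (y ^ a / y)) * ‖z - z'‖ := by gcongr
      have e : φ' y z - φ' (y / 2) z - (φ' y z' - φ' (y / 2) z') =
        (φ' y z - φ' y z') - (φ' (y / 2) z - φ' (y / 2) z') := by abel
      rw [e]
      refine (norm_sub_le _ _).trans ?_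
      linarith
  set q : ℝ := (1/2 : ℝ) ^ a with hq
  have hq0 : 0 < q := by positivity
  have hq1 : q < 1 := Real.rpow_lt_one (by norm_num) (by norm_num) ha0
  have main : ∀ y, 0 < y → y ≤ 1/2 → ∃ G : En n → (En n →L[ℝ] ℝ), ∀ x, ‖x‖ < 1/2 →
      HasFDerivAt g (G x) x ∧ ‖φ' y x - G x‖ ≤ 100 * K / (1 - q) * y ^ a := by
    intro y h0 h1
    have hyk : ∀ k : ℕ, 0 < y * (1/2) ^ k ∧ y * (1/2) ^ k ≤ 1/2 := fun k => ⟨by positivity, by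
      have : (1/2 : ℝ) ^ k ≤ 1 := pow_le_one₀ (by norm_num) (by norm_num)
      nlinarith⟩
    have hs : ∀ x, ‖x‖ < 1/2 → ∀ k : ℕ, dist (φ' (y * (1/2) ^ k) x) (φ' (y * (1/2) ^ (k+1)) x) ≤
        (100 * K * y ^ a) * q ^ k := by
      intro x hx k
      have := step _ x (hyk k).1 (hyk k).2 hx
      rw [dist_eq_norm, show y * (1/2 : ℝ) ^ (k+1) = y * (1/2) ^ k / 2 by rw [pow_succ]; ring]
      refine this.trans (le_of_eq ?_)
      rw [Real.mul_rpow h0.le (by positivity), hq, ← Real.rpow_natCast, ← Real.rpow_natCast,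
        ← Real.rpow_mul (by norm_num), ← Real.rpow_mul (by norm_num), mul_comm a]
      ring
    have hlim : ∀ x, ∃ G, ‖x‖ < 1/2 → Tendsto (fun k : ℕ => φ' (y * (1/2) ^ k) x) atTop (𝓝 G) := by
      intro x
      by_cases hx : ‖x‖ < 1/2
      · obtain ⟨G, hG⟩ := cauchySeq_tendsto_of_complete (cauchySeq_of_le_geometric q _ hq1 (hs x hx))
        exact ⟨G, fun _ => hG⟩
      · exact ⟨0, fun h => absurd h hx⟩
    choose G hG using hlim
    refine ⟨G, ?_⟩
    have hball : ∀ x, x ∈ Metric.ball (0 : En n) (1/2) ↔ ‖x‖ < 1/2 := fun x => by simp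
    have hder : ∀ x ∈ Metric.ball (0 : En n) (1/2), HasFDerivAt g (G x) x := by
      intro x0 hx0
      refine hasFDerivAt_of_tendstoUniformlyOn (l := atTop) (f := fun k : ℕ => φ (y * (1/2) ^ k))
        (f' := fun k : ℕ => φ' (y * (1/2) ^ k)) Metric.isOpen_ball ?_ ?_ ?_ hx0
      · rw [Metric.tendstoUniformlyOn_iff]
        intro e he
        have ht : Tendsto (fun k : ℕ => 100 * K * y ^ a * q ^ k / (1 - q)) atTop (𝓝 0) := by
          have := ((tendsto_pow_atTop_nhds_zero_of_lt_one hq0.le hq1).const_mul (100 * K * y ^ a)).div_const (1 - q)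
          simpa using this
        filter_upwards [ht.eventually (gt_mem_nhds he)] with k hk x hx
        rw [dist_comm]
        rw [hball] at hx
        exact (dist_le_of_le_geometric_of_tendsto q _ hq1 (hs x hx) (hG x hx) k).trans_lt hk
      · intro k x hx
        rw [hball] at hx
        exact hd _ x (hyk k).1 (hyk k).2 (by linarith)
      · intro x hx
        rw [hball] at hx
        rw [tendsto_iff_dist_tendsto_zero]
        have ht : Tendsto (fun k : ℕ => K * (y * (1/2) ^ k) ^ (1 + a)) atTop (𝓝 0) := by
          have t1 : Tendsto (fun k : ℕ => y * (1/2 : ℝ) ^ k) atTop (𝓝 (y * 0)) :=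
            (tendsto_pow_atTop_nhds_zero_of_lt_one (by norm_num) (by norm_num)).const_mul y
          have t2 := (t1.rpow_const (p := 1 + a) (Or.inr (by linarith))).const_mul K
          rw [mul_zero, Real.zero_rpow (by linarith), mul_zero] at t2
          exact t2
        refine squeeze_zero (fun _ => dist_nonneg) (fun k => ?_) ht
        rw [dist_comm, Real.dist_eq]
        exact hg _ x (hyk k).1 (hyk k).2 (by linarith)
    intro x hx
    refine ⟨hder x ((hball x).2 hx), ?_⟩
    have := dist_le_of_le_geometric_of_tendsto₀ q _ hq1 (hs x hx) (hG x hx)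
    rw [dist_eq_norm] at this
    simp only [pow_zero, mul_one] at this
    refine this.trans (le_of_eq ?_)
    ring
  set B := 100 * K / (1 - q) with hB
  have hB0 : 0 ≤ B := div_nonneg (by positivity) (by linarith)
  refine ⟨fun x => fderiv ℝ g x, 2 * B + 2 * K, fun x hx => ?_, fun x x' hx hx' => ?_⟩
  · obtain ⟨G, hG⟩ := main (1/2) (by norm_num) le_rfl
    exact (hG x hx).1.differentiableAt.hasFDerivAt
  · rcases eq_or_ne x x' with rfl | hne
    · simp [Real.zero_rpow ha0.ne']
    have hδ : 0 < ‖x - x'‖ := norm_pos_iff.2 (sub_ne_zero.2 hne)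
    have hδ1 : ‖x - x'‖ ≤ 1 := by linarith [norm_sub_le x x']
    set δ := ‖x - x'‖ with hδd
    obtain ⟨G, hG⟩ := main (δ / 2) (by linarith) (by linarith)
    have k1 := (hG x hx).2
    have k2 := (hG x' hx').2
    have k3 := hl (δ / 2) x x' (by linarith) (by linarith) (by linarith) (by linarith)
    simp only [(hG x hx).1.fderiv, (hG x' hx').1.fderiv]
    have e : G x - G x' = -(φ' (δ/2) x - G x) + (φ' (δ/2) x - φ' (δ/2) x') + (φ' (δ/2) x' - G x') := by abel
    have hda : (δ / 2) ^ a ≤ δ ^ a := Real.rpow_le_rpow (by linarith) (by linarith) ha0.le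
    have k4 : K * (δ / 2) ^ (a - 1) * δ = 2 * K * (δ/2) ^ a := by
      rw [Real.rpow_sub_one (by linarith)]; field_simp
    rw [← hδd, k4] at k3
    have n1 := norm_add₃_le (a := -(φ' (δ/2) x - G x)) (b := φ' (δ/2) x - φ' (δ/2) x') (c := φ' (δ/2) x' - G x')
    rw [← e, norm_neg] at n1
    have m1 := mul_le_mul_of_nonneg_left hda hB0
    have m2 := mul_le_mul_of_nonneg_left hda hK
    linarith

theorem norm_smul_sub_smul {n : ℕ} {c : ℝ} (hc : 0 ≤ c) (A B : En n →L[ℝ] ℝ) :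
    ‖c • A - c • B‖ = c * ‖A - B‖ := by
  have h : c • A - c • B = c • (A - B) := by
    ext x
    simp [mul_sub]
  rw [h, norm_smul, Real.norm_of_nonneg hc]

theorem dat_of {n : ℕ} (hn : 1 ≤ n) {a : ℝ} (ha0 : 0 < a) (ha1 : a < 1) {u : En n × ℝ → ℝ}
    {f' : En n → (En n →L[ℝ] ℝ)} {M0 M1 M2 : ℝ}
    (hc : ContinuousOn u (halfBallWithBase n 1)) (hu : IsAHarmonicOn a u (halfBall n 1))
    (hf : ∀ x ∈ flatBall n 1, HasFDerivWithinAt (fun z => u (z, 0)) (f' x) (flatBall n 1) x)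
    (h0 : ∀ x ∈ flatBall n 1, |u (x, 0)| ≤ M0)
    (h1 : ∀ x ∈ flatBall n 1, ‖f' x‖ ≤ M1)
    (h2 : ∀ x ∈ flatBall n 1, ∀ x' ∈ flatBall n 1, ‖f' x - f' x'‖ ≤ M2 * ‖x - x'‖) :
    Dat a u f' M0 M1 M2 := by
  have hreg : ∀ p : En n × ℝ, ‖p‖ ≤ 7/10 → ‖p.1‖ ^ 2 + p.2 ^ 2 < 1 ^ 2 := by
    intro p hp
    have e1 := (norm_fst_le p).trans hp
    have e2 := (norm_snd_le p).trans hp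
    rw [Real.norm_eq_abs] at e2
    rw [← sq_abs p.2]
    nlinarith [norm_nonneg p.1, abs_nonneg p.2]
  have z0 : (0 : En n) ∈ flatBall n 1 := by simp [flatBall]
  have hopen : IsOpen (flatBall n 1) := isOpen_lt continuous_norm continuous_const
  refine ⟨hc.mono fun p hp => ⟨hreg p hp.1, hp.2⟩, ?_, fun x hx => (hf x hx).hasFDerivAt (hopen.mem_nhds hx),
    h0, h1, h2, (abs_nonneg _).trans (h0 0 z0), (norm_nonneg _).trans (h1 0 z0), ?_, ha0, ha1⟩
  · intro p hp
    have hm : p ∈ halfBall n 1 := ⟨hreg p hp.1.le, hp.2⟩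
    exact ⟨hu.1.contDiffAt ((isOpen_halfBall n 1).mem_nhds hm), hu.2 p hm⟩
  · set e : En n := (1/2 : ℝ) • EuclideanSpace.single (⟨0, hn⟩ : Fin n) (1:ℝ) with he
    have hen : ‖e‖ = 1/2 := by rw [he, norm_smul]; simp
    have := h2 e (by show ‖e‖ < 1; rw [hen]; norm_num) 0 z0
    rw [sub_zero, hen] at this
    linarith [norm_nonneg (f' e - f' 0)]

/-- **Lemma 2.2 (local expansion).** If `u` is `a`-harmonic in `B_1^+`, lies in
`L²(B_1^+, y^a)`, and its trace `f(x) = u(x,0)` is `C^{1,1}` on `B_1^0`, then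
`u(x,y) = f(x) + y^{1-a} g(x) + O(y²)` in `B_{1/2}^+`, where `g` has an `a`-Hölder
continuous derivative (here `a = 1-2s`, `1-a = 2s`). -/
theorem local_expansion_of_extension (n : ℕ) (hn : 1 ≤ n) (s : ℝ)
    (hs : s ∈ Ioo (0 : ℝ) (1/2)) :
    ∃ C > 0, ∀ (u : En n × ℝ → ℝ) (f' : En n → (En n →L[ℝ] ℝ)) (M0 M1 M2 J : ℝ),
      ContinuousOn u (halfBallWithBase n 1) →
      IsAHarmonicOn (1 - 2*s) u (halfBall n 1) →
      IntegrableOn (fun p : En n × ℝ => p.2 ^ (1 - 2*s) * (u p)^2) (halfBall n 1) volume →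
      (∀ x ∈ flatBall n 1, HasFDerivWithinAt (fun z => u (z, 0)) (f' x) (flatBall n 1) x) →
      (∀ x ∈ flatBall n 1, |u (x, 0)| ≤ M0) →
      (∀ x ∈ flatBall n 1, ‖f' x‖ ≤ M1) →
      (∀ x ∈ flatBall n 1, ∀ x' ∈ flatBall n 1, ‖f' x - f' x'‖ ≤ M2 * ‖x - x'‖) →
      0 ≤ J →
      (∫ p in halfBall n 1, p.2 ^ (1 - 2*s) * (u p)^2) ≤ J^2 →
      ∃ (g : En n → ℝ) (g' : En n → (En n →L[ℝ] ℝ)) (K : ℝ),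
        (∀ x ∈ flatBall n (1/2), HasFDerivWithinAt g (g' x) (flatBall n (1/2)) x) ∧
        (∀ x ∈ flatBall n (1/2), ∀ x' ∈ flatBall n (1/2),
          ‖g' x - g' x'‖ ≤ K * ‖x - x'‖ ^ (1 - 2*s)) ∧
        ∀ p ∈ halfBall n (1/2),
          |u p - u (p.1, 0) - p.2 ^ (2*s) * g p.1| ≤ C * p.2^2 * (M0 + M1 + M2 + J) := by
  obtain ⟨hs0, hs1⟩ := hs
  set a : ℝ := 1 - 2 * s with ha
  have ha0 : 0 < a := by rw [ha]; linarith
  have ha1 : a < 1 := by rw [ha]; linarith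
  obtain ⟨C1, hC1, hsup⟩ := sup_bound n a ha0 ha1
  refine ⟨(n + 1) * (200 * (n + 3) * (200 * (n + 3) * C1 + 2) + 4), by positivity, ?_⟩
  intro u f' M0 M1 M2 J hc hu hI hf h0 h1 h2 hJ0 hJ
  have H : Dat a u f' M0 M1 M2 := dat_of hn ha0 ha1 hc hu hf h0 h1 h2
  have q0 := H.p0
  have q1 := H.p1
  have q2 := H.p2
  set N := M0 + M1 + M2 + J with hN
  have hN0 : 0 ≤ N := by positivity
  have hM : ∀ p : En n × ℝ, ‖p‖ ≤ 13/20 → 0 ≤ p.2 → |u p| ≤ C1 * N := by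
    intro p hp hp2
    refine (hsup u f' M0 M1 M2 J H hI hJ0 hJ p hp hp2).trans ?_
    gcongr; linarith
  set D := 200 * (n + 3) * (200 * (n + 3) * (C1 * N) + 2 * M1) + 4 * M2 with hD
  have hD0 : 0 ≤ D := by positivity
  have hDN : D ≤ (200 * (n + 3) * (200 * (n + 3) * C1 + 2) + 4) * N := by
    have e : (200 * (n + 3) * (200 * (n + 3) * C1 + 2) + 4) * N =
      200 * (n + 3) * (200 * (n + 3) * (C1 * N) + 2 * N) + 4 * N := by ring
    rw [e, hD]
    have : M1 ≤ N := by linarith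
    have : M2 ≤ N := by linarith
    gcongr
  have hex : ∀ x : En n, ∃ G : ℝ, ‖x‖ < 6/10 → ∀ y, 0 < y → y < 6/10 →
      |u (x, y) - u (x, 0) - y ^ (1 - a) * G| ≤ n * D * y ^ 2 := by
    intro x
    by_cases hx : ‖x‖ < 6/10
    · obtain ⟨G, hG⟩ := H.expand hM hD hD0 hx
      exact ⟨G, fun _ => hG⟩
    · exact ⟨0, fun h => absurd h hx⟩
  choose g hg using hex
  have hzn : ∀ (x : En n) (y : ℝ), ‖x‖ < 6/10 → 0 < y → y ≤ 1/2 → ‖((x, y) : En n × ℝ)‖ < 7/10 := by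
    intro x y hx k0 k1
    rw [Prod.norm_def]
    refine max_lt (by simp only; linarith) ?_
    simp only; rw [Real.norm_of_nonneg k0.le]; linarith
  obtain ⟨g', K, hg1, hg2⟩ := holder_limit (g := g) (K := n * D + (n * (n * D) + M2)) ha0 ha1
    (φ := fun y x => y ^ (a - 1) * (u (x, y) - u (x, 0)))
    (φ' := fun y x => y ^ (a - 1) • ((fderiv ℝ u (x, y)).comp (ContinuousLinearMap.inl ℝ (En n) ℝ) - f' x))
    (by positivity) (by
      intro y x k0 k1 hx
      have d1 := hasFDerivAt_slice ((H.hu (x, y) ⟨hzn x y hx k0 k1, k0⟩).1.differentiableAt (by norm_num))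
      exact (d1.sub (H.hf x (by linarith))).const_mul _) (by
      intro y x k0 k1 hx
      have k2 := hg x hx y k0 (by linarith)
      have hp : 0 < y ^ (a - 1) := by positivity
      have e1 : y ^ (a - 1) * y ^ (1 - a) = 1 := by rw [← Real.rpow_add k0]; simp
      have e2 : g x - y ^ (a - 1) * (u (x, y) - u (x, 0)) =
          - (y ^ (a - 1) * (u (x, y) - u (x, 0) - y ^ (1 - a) * g x)) := by
        linear_combination (- g x) * e1
      have e3 : y ^ (a - 1) * y ^ 2 = y ^ (1 + a) := by
        rw [← Real.rpow_natCast, ← Real.rpow_add k0]; congr 1; push_cast; ring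
      rw [e2, abs_neg, abs_mul, abs_of_pos hp]
      calc _ ≤ y ^ (a - 1) * (n * D * y ^ 2) := by gcongr
        _ = n * D * y ^ (1 + a) := by rw [← e3]; ring
        _ ≤ _ := by
          gcongr
          have : 0 ≤ n * (n * D) + M2 := by positivity
          linarith) (by
      intro y x x' k0 k1 hx hx'
      have hp : 0 < y ^ (a - 1) := by positivity
      have l1 := H.slice_lip hM hD hD0 k0 (by linarith : y ≤ 6/10) hx hx'
      have l2 := H.h2 x (by linarith) x' (by linarith)
      refine (le_of_eq (norm_smul_sub_smul hp.le _ _)).trans ?_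
      rw [mul_comm (n * D + _), mul_assoc]
      refine mul_le_mul_of_nonneg_left ?_ hp.le
      have l3 := norm_sub_le ((fderiv ℝ u (x, y)).comp (ContinuousLinearMap.inl ℝ (En n) ℝ) -
        (fderiv ℝ u (x', y)).comp (ContinuousLinearMap.inl ℝ (En n) ℝ)) (f' x - f' x')
      rw [sub_sub_sub_comm] at l3
      have l4 : 0 ≤ n * D * ‖x - x'‖ := by positivity
      linarith)
  refine ⟨g, g', K, fun x hx => (hg1 x hx).hasFDerivWithinAt, fun x hx x' hx' => hg2 x x' hx hx', ?_⟩
  intro p hp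
  have hp2 : 0 < p.2 := hp.2
  have hp1 : ‖p.1‖ ^ 2 + p.2 ^ 2 < (1/2) ^ 2 := hp.1
  have b1 : ‖p.1‖ < 1/2 := by
    apply lt_of_pow_lt_pow_left₀ 2 (by norm_num); linarith [sq_nonneg p.2]
  have b2 : p.2 < 1/2 := by
    apply lt_of_pow_lt_pow_left₀ 2 (by norm_num); linarith [sq_nonneg ‖p.1‖]
  have hfin := hg p.1 (by linarith) p.2 hp2 (by linarith)
  rw [show 1 - a = 2 * s by rw [ha]; ring] at hfin
  refine hfin.trans ?_
  have : n * D * p.2 ^ 2 ≤ (n + 1) * ((200 * (n + 3) * (200 * (n + 3) * C1 + 2) + 4) * N) * p.2 ^ 2 := by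
    gcongr; linarith
  refine this.trans (le_of_eq ?_)
  ring

end
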